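/- arXiv:2201.05534 — 2 statements merged into one kernel-verified Lean document; each statement's English description precedes it below -/
import Mathlib

section
/- For α ∈ [1/2,1), a density operator ρ_AB, and any density operator η_B, tr((η_B^{-α'/2}(σ_AB + ε P_AB)η_B^{-α'/2})^α) ≤ 2^{(1-α)H̃_α^↑(A|B)_ρ} + ε^α d_A^{1-α}, whenever σ_AB + ε P_AB = ρ_AB + ε Q_AB with P_AB, Q_AB density operators and ε > 0. -/
open Matrix MeasureTheory
open scoped Kronecker ComplexOrder

noncomputable def mpow {n : Type*} [Fintype n] [DecidableEq n]
    (A : Matrix n n ℂ) (p : ℝ) : Matrix n n ℂ :=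
  if hA : A.IsHermitian then
    (hA.eigenvectorUnitary : Matrix n n ℂ) *
      Matrix.diagonal (fun i => ((hA.eigenvalues i ^ p : ℝ) : ℂ)) *
      (star (hA.eigenvectorUnitary : Matrix n n ℂ))
  else 0

noncomputable def traceNorm {n : Type*} [Fintype n] [DecidableEq n]
    (A : Matrix n n ℂ) : ℝ :=
  (mpow (Aᴴ * A) (1/2)).trace.re

def IsDensity {n : Type*} [Fintype n] [DecidableEq n] (ρ : Matrix n n ℂ) : Prop :=
  ρ.PosSemidef ∧ ρ.trace = 1

noncomputable def sandTr {a b : Type*} [Fintype a] [DecidableEq a] [Fintype b] [DecidableEq b]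
    (α : ℝ) (ρ : Matrix (a × b) (a × b) ℂ) (η : Matrix b b ℂ) : ℝ :=
  (mpow (((1 : Matrix a a ℂ) ⊗ₖ mpow η ((1 - α)/(2*α))) * ρ *
      ((1 : Matrix a a ℂ) ⊗ₖ mpow η ((1 - α)/(2*α)))) α).trace.re

noncomputable def Hcond {a b : Type*} [Fintype a] [DecidableEq a] [Fintype b] [DecidableEq b]
    (α : ℝ) (ρ : Matrix (a × b) (a × b) ℂ) : ℝ :=
  ⨆ η : {η : Matrix b b ℂ // IsDensity η}, (1/(1-α)) * Real.logb 2 (sandTr α ρ η)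

/-!
Nussbaum–Szkoła weights write `tr (f(A) g(B))` as a sum over pairs of eigenvalues of `A` and `B`, so
classical Hölder applies to such traces. Together with one operator inequality each time, this
gives both bounds that the theorem needs.

* McCarthy's inequality. For `0 ≤ A ≤ C` we have `A^(1/2) C⁻¹ A^(1/2) ≤ 1`, hence
  `tr (A^(1+α) C⁻¹) ≤ tr A^α`, and interpolating between this trace and `tr A^α` gives
  `tr (A C^(α-1)) ≤ tr A^α`. Apply it to both summands of `C = A + B`.
* The bound `tr ((T^p Q T^p)^α) ≤ (tr Q)^α (tr T)^(1-α)` for `p = (1-α)/(2α) = -α'/2`. With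
  `M = T^p Q T^p`, interpolate between `tr (M T^(-2p)) ≤ tr Q` and `tr T`. For `T = 1 ⊗ η` the
  last factor is `d_A^(1-α)`.

Negative powers are pseudo-inverses, since `0 ^ x = 0` for `x ≠ 0`; no matrix has to be invertible.
-/

open RCLike
open scoped MatrixOrder NNReal

section MatrixInequalities

lemma le_one_of_mul_self_le_self {R : Type*} [Ring R] [PartialOrder R] [StarRing R]
    [StarOrderedRing R] {a : R} (ha : IsSelfAdjoint a) (h : a * a ≤ a) : a ≤ 1 := by
  have decomp : 1 - a = star (1 - a) * (1 - a) + (a - a * a) := by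
    rw [((IsSelfAdjoint.one R).sub ha).star_eq]
    noncomm_ring
  rw [← sub_nonneg, decomp]
  exact add_nonneg (star_mul_self_nonneg _) (sub_nonneg.2 h)

lemma re_trace_nonneg {𝕜 n : Type*} [RCLike 𝕜] [Fintype n] {A : Matrix n n 𝕜} (hA : 0 ≤ A) :
    0 ≤ re A.trace :=
  (RCLike.nonneg_iff.1 (nonneg_iff_posSemidef.1 hA).trace_nonneg).1

variable {𝕜 n : Type*} [RCLike 𝕜] [Fintype n] [DecidableEq n]

lemma matrix_continuousOn_spectrum {Y : Type*} [TopologicalSpace Y] (A : Matrix n n 𝕜)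
    (f : ℝ≥0 → Y) : ContinuousOn f (spectrum ℝ≥0 A) :=
  (A.finite_real_spectrum.preimage NNReal.coe_injective.injOn).continuousOn f

lemma matrix_cfc_mul_cfc (f g : ℝ≥0 → ℝ≥0) (A : Matrix n n 𝕜) :
    cfc f A * cfc g A = cfc (fun x => f x * g x) A :=
  (cfc_mul f g A (matrix_continuousOn_spectrum A f) (matrix_continuousOn_spectrum A g)).symm

lemma rpow_mul_rpow_of_add_ne_zero {A : Matrix n n 𝕜} {p q : ℝ} (h : p + q ≠ 0) :
    A ^ p * A ^ q = A ^ (p + q) := by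
  simp only [CFC.rpow_def, matrix_cfc_mul_cfc, NNReal.rpow_add' h]

lemma cfc_eq_unitary_mul_diagonal_mul (f : ℝ≥0 → ℝ≥0) {A : Matrix n n 𝕜} (hA : A.PosSemidef) :
    cfc f A = (hA.1.eigenvectorUnitary : Matrix n n 𝕜) *
      diagonal (fun i => ((f (hA.1.eigenvalues i).toNNReal : ℝ) : 𝕜)) *
      star (hA.1.eigenvectorUnitary : Matrix n n 𝕜) := by
  rw [cfc_nnreal_eq_real f A hA.nonneg, hA.1.cfc_eq, IsHermitian.cfc,
    Unitary.conjStarAlgAut_apply]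
  rfl

lemma mpow_eq_rpow {A : Matrix n n ℂ} (hA : A.PosSemidef) (p : ℝ) : mpow A p = A ^ p := by
  rw [CFC.rpow_def, cfc_eq_unitary_mul_diagonal_mul _ hA, mpow, dif_pos hA.1]
  simp only [NNReal.coe_rpow, Real.coe_toNNReal _ (hA.eigenvalues_nonneg _)]
  rfl

/-- The Nussbaum–Szkoła weight `|⟨uᵢ, vⱼ⟩|²`, where `u` and `v` are the eigenbases of `A` and `B`
chosen by the spectral theorem. -/
noncomputable def overlap {A B : Matrix n n 𝕜} (hA : A.IsHermitian) (hB : B.IsHermitian)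
    (i j : n) : ℝ≥0 :=
  ‖(star (hA.eigenvectorUnitary : Matrix n n 𝕜) * hB.eigenvectorUnitary) i j‖₊ ^ 2

lemma re_trace_diagonal_mul_conjugate (d e : n → ℝ) (W : Matrix n n 𝕜) :
    re (diagonal (fun i => (d i : 𝕜)) * W * diagonal (fun j => (e j : 𝕜)) * star W).trace =
      ∑ ij : n × n, ‖W ij.1 ij.2‖ ^ 2 * (d ij.1 * e ij.2) := by
  have entry (d e : ℝ) (w : 𝕜) : re (d * w * e * star w) = ‖w‖ ^ 2 * (d * e) := by
    have : (d * w * e * star w : 𝕜) = ((‖w‖ ^ 2 * (d * e) : ℝ) : 𝕜) := by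
      push_cast
      rw [← RCLike.mul_conj, starRingEnd_apply]
      ring
    rw [this, ofReal_re]
  simp only [Matrix.trace, diag_apply, Matrix.mul_apply (N := star W), mul_diagonal, diagonal_mul,
    star_apply, map_sum, entry, Fintype.sum_prod_type]

lemma re_trace_cfc_mul_cfc (f g : ℝ≥0 → ℝ≥0) {A B : Matrix n n 𝕜} (hA : A.PosSemidef)
    (hB : B.PosSemidef) :
    re (cfc f A * cfc g B).trace = ∑ ij : n × n, (overlap hA.1 hB.1 ij.1 ij.2 : ℝ) *
      (f (hA.1.eigenvalues ij.1).toNNReal * g (hB.1.eigenvalues ij.2).toNNReal) := by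
  refine Eq.trans ?_ (re_trace_diagonal_mul_conjugate
    (fun i => f (hA.1.eigenvalues i).toNNReal) (fun j => g (hB.1.eigenvalues j).toNNReal) _)
  rw [cfc_eq_unitary_mul_diagonal_mul f hA, cfc_eq_unitary_mul_diagonal_mul g hB, star_mul,
    star_star, Matrix.mul_assoc, Matrix.mul_assoc, Matrix.trace_mul_comm]
  simp only [Matrix.mul_assoc]

omit [DecidableEq n] in
lemma re_trace_mul_nonneg {A B : Matrix n n 𝕜} (hA : 0 ≤ A) (hB : 0 ≤ B) :
    0 ≤ re (A * B).trace := by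
  classical
  rw [nonneg_iff_posSemidef] at hA hB
  simpa only [id, cfc_id' ℝ≥0 A hA.nonneg, cfc_id' ℝ≥0 B hB.nonneg] using
    (re_trace_cfc_mul_cfc (fun x => x) (fun x => x) hA hB).ge.trans' (by positivity)

lemma re_trace_cfc_mul_cfc_le_rpow_mul_rpow {θ : ℝ} (hθ₀ : 0 < θ) (hθ₁ : θ < 1)
    (f₁ f₂ g₁ g₂ : ℝ≥0 → ℝ≥0) {A B : Matrix n n 𝕜} (hA : 0 ≤ A) (hB : 0 ≤ B) :
    re (cfc (fun x => f₁ x ^ θ * f₂ x ^ (1 - θ)) A *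
        cfc (fun x => g₁ x ^ θ * g₂ x ^ (1 - θ)) B).trace ≤
      re (cfc f₁ A * cfc g₁ B).trace ^ θ * re (cfc f₂ A * cfc g₂ B).trace ^ (1 - θ) := by
  rw [nonneg_iff_posSemidef] at hA hB
  have conj : (1 / θ).HolderConjugate (1 / (1 - θ)) :=
    Real.holderConjugate_one_div hθ₀ (sub_pos.2 hθ₁) (by ring)
  let w (f g : ℝ≥0 → ℝ≥0) (ij : n × n) : ℝ≥0 := overlap hA.1 hB.1 ij.1 ij.2 *
    (f (hA.1.eigenvalues ij.1).toNNReal * g (hB.1.eigenvalues ij.2).toNNReal)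
  have split (ij : n × n) : w (fun x => f₁ x ^ θ * f₂ x ^ (1 - θ))
      (fun x => g₁ x ^ θ * g₂ x ^ (1 - θ)) ij = w f₁ g₁ ij ^ θ * w f₂ g₂ ij ^ (1 - θ) := by
    simp only [w, NNReal.mul_rpow]
    nth_rewrite 1 [← NNReal.rpow_one (overlap hA.1 hB.1 ij.1 ij.2),
      ← add_sub_cancel θ 1, NNReal.rpow_add' (by simp)]
    ring
  have holder := NNReal.inner_le_Lp_mul_Lq Finset.univ (fun ij => w f₁ g₁ ij ^ θ)
    (fun ij => w f₂ g₂ ij ^ (1 - θ)) conj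
  simp only [one_div_one_div, ← NNReal.rpow_mul, mul_one_div_cancel hθ₀.ne',
    mul_one_div_cancel (sub_pos.2 hθ₁).ne', NNReal.rpow_one, ← split] at holder
  simp only [re_trace_cfc_mul_cfc _ _ hA hB]
  exact_mod_cast holder

omit [DecidableEq n] in
lemma re_trace_mul_le_re_trace_mul {A B C : Matrix n n 𝕜} (hA : 0 ≤ A) (h : B ≤ C) :
    re (A * B).trace ≤ re (A * C).trace := by
  simpa only [mul_sub, trace_sub, map_sub, sub_nonneg] using
    re_trace_mul_nonneg hA (sub_nonneg.2 h)

lemma rpow_half_mul_rpow_neg_one_mul_rpow_half_le_one {A C : Matrix n n 𝕜} (hA : 0 ≤ A)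
    (hAC : A ≤ C) : A ^ (1 / 2 : ℝ) * C ^ (-1 : ℝ) * A ^ (1 / 2 : ℝ) ≤ 1 := by
  have hC : 0 ≤ C := hA.trans hAC
  set S := A ^ (1 / 2 : ℝ)
  set D := C ^ (-1 : ℝ)
  have hS : 0 ≤ S := CFC.rpow_nonneg
  have hD : 0 ≤ D := CFC.rpow_nonneg
  have sq_S : S * S = A := by
    rw [rpow_mul_rpow_of_add_ne_zero (by norm_num), add_halves, CFC.rpow_one A]
  have pinv : D * C * D = D := by
    have inv_mul_mul_inv (x : ℝ≥0) : x⁻¹ * x * x⁻¹ = x⁻¹ := by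
      simpa only [inv_inv] using mul_inv_mul_cancel x⁻¹
    nth_rw 1 [← CFC.rpow_one C]
    simp only [D, CFC.rpow_def, matrix_cfc_mul_cfc, NNReal.rpow_neg_one, NNReal.rpow_one,
      inv_mul_mul_inv]
  apply le_one_of_mul_self_le_self (conjugate_nonneg_of_nonneg hD hS).isSelfAdjoint
  calc S * D * S * (S * D * S) = S * (D * A * D) * S := by rw [← sq_S]; noncomm_ring
    _ ≤ S * (D * C * D) * S :=
      conjugate_le_conjugate_of_nonneg (conjugate_le_conjugate_of_nonneg hAC hD) hS
    _ = S * D * S := by rw [pinv]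

lemma re_trace_rpow_one_add_mul_rpow_neg_one_le {A C : Matrix n n 𝕜} {α : ℝ} (hα : 0 < α)
    (hA : 0 ≤ A) (hAC : A ≤ C) : re (A ^ (1 + α) * C ^ (-1 : ℝ)).trace ≤ re (A ^ α).trace := by
  have split : A ^ (1 + α) = A ^ (1 / 2 : ℝ) * A ^ α * A ^ (1 / 2 : ℝ) := by
    rw [rpow_mul_rpow_of_add_ne_zero (by positivity), rpow_mul_rpow_of_add_ne_zero (by positivity)]
    ring_nf
  calc re (A ^ (1 + α) * C ^ (-1 : ℝ)).trace
      = re (A ^ α * (A ^ (1 / 2 : ℝ) * C ^ (-1 : ℝ) * A ^ (1 / 2 : ℝ))).trace := by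
        rw [split, Matrix.mul_assoc, Matrix.mul_assoc, Matrix.trace_mul_comm, Matrix.mul_assoc]
    _ ≤ re (A ^ α * 1).trace := re_trace_mul_le_re_trace_mul CFC.rpow_nonneg
        (rpow_half_mul_rpow_neg_one_mul_rpow_half_le_one hA hAC)
    _ = re (A ^ α).trace := by rw [mul_one]

lemma re_trace_mul_rpow_sub_one_le {A C : Matrix n n 𝕜} {α : ℝ} (hα₀ : 0 < α) (hα₁ : α < 1)
    (hA : 0 ≤ A) (hAC : A ≤ C) : re (A * C ^ (α - 1)).trace ≤ re (A ^ α).trace := by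
  have hA_eq : cfc (fun x : ℝ≥0 => (x ^ α) ^ α * (x ^ (1 + α)) ^ (1 - α)) A = A := by
    have exponent : α * α + (1 + α) * (1 - α) = 1 := by ring
    simp only [← NNReal.rpow_mul, ← NNReal.rpow_add' (exponent.trans_ne one_ne_zero), exponent,
      NNReal.rpow_one, cfc_id' ℝ≥0 A]
  have hC_eq : cfc (fun x : ℝ≥0 => 1 ^ α * (x ^ (-1 : ℝ)) ^ (1 - α)) C = C ^ (α - 1) := by
    simp only [CFC.rpow_def, NNReal.one_rpow, one_mul, ← NNReal.rpow_mul, neg_one_mul, neg_sub]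
  have holder := re_trace_cfc_mul_cfc_le_rpow_mul_rpow hα₀ hα₁ (fun x => x ^ α)
    (fun x => x ^ (1 + α)) (fun _ => 1) (fun x => x ^ (-1 : ℝ)) hA (hA.trans hAC)
  rw [hA_eq, hC_eq, cfc_const_one ℝ≥0 C (hA.trans hAC), mul_one] at holder
  have trace_nonneg : 0 ≤ re (A ^ (1 + α) * C ^ (-1 : ℝ)).trace :=
    re_trace_mul_nonneg CFC.rpow_nonneg CFC.rpow_nonneg
  have trace_le := re_trace_rpow_one_add_mul_rpow_neg_one_le hα₀ hA hAC
  have rpow_nonneg : 0 ≤ re (A ^ α).trace := trace_nonneg.trans trace_le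
  calc re (A * C ^ (α - 1)).trace
      ≤ re (A ^ α).trace ^ α * re (A ^ (1 + α) * C ^ (-1 : ℝ)).trace ^ (1 - α) := holder
    _ ≤ re (A ^ α).trace ^ α * re (A ^ α).trace ^ (1 - α) := by gcongr
    _ = re (A ^ α).trace := by
        rw [← Real.rpow_add' rpow_nonneg (by simp), add_sub_cancel, Real.rpow_one]

lemma re_trace_add_rpow_le {A B : Matrix n n 𝕜} {α : ℝ} (hα₀ : 0 < α) (hα₁ : α < 1)
    (hA : 0 ≤ A) (hB : 0 ≤ B) :
    re ((A + B) ^ α).trace ≤ re (A ^ α).trace + re (B ^ α).trace := by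
  have split : (A + B) ^ α = A * (A + B) ^ (α - 1) + B * (A + B) ^ (α - 1) := by
    rw [← add_mul]
    nth_rw 2 [← CFC.rpow_one (A + B) (add_nonneg hA hB)]
    rw [rpow_mul_rpow_of_add_ne_zero (by simpa using hα₀.ne'), add_sub_cancel]
  rw [split, trace_add, map_add]
  exact add_le_add
    (re_trace_mul_rpow_sub_one_le hα₀ hα₁ hA (le_add_of_nonneg_right hB))
    (re_trace_mul_rpow_sub_one_le hα₀ hα₁ hB (le_add_of_nonneg_left hA))

/-- The orthogonal projection onto the range of a positive semidefinite matrix. The functional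
calculus over `ℝ≥0` makes it `0` on matrices that are not positive semidefinite. -/
noncomputable def supportProj (A : Matrix n n 𝕜) : Matrix n n 𝕜 :=
  cfc (fun x : ℝ≥0 => if x = 0 then 0 else 1) A

lemma supportProj_le_one (A : Matrix n n 𝕜) : supportProj A ≤ 1 :=
  cfc_le_one _ A fun x _ => by split_ifs <;> simp

lemma rpow_mul_supportProj (A : Matrix n n 𝕜) {p : ℝ} (hp : p ≠ 0) :
    A ^ p * supportProj A = A ^ p := by
  rw [supportProj, CFC.rpow_def, matrix_cfc_mul_cfc]
  congr with x
  by_cases hx : x = 0 <;> simp [hx, hp]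

lemma rpow_mul_rpow_neg (A : Matrix n n 𝕜) {p : ℝ} (hp : p ≠ 0) :
    A ^ p * A ^ (-p) = supportProj A := by
  rw [supportProj, CFC.rpow_def, CFC.rpow_def, matrix_cfc_mul_cfc]
  congr with x
  by_cases hx : x = 0
  · simp [hx, hp]
  · simp [hx, ← NNReal.rpow_add hx]

lemma rpow_mul_eq_of_mul_eq {A P : Matrix n n 𝕜} (hA : 0 ≤ A) (h : A * P = A) {p : ℝ}
    (hp : p ≠ 0) : A ^ p * P = A ^ p := by
  have factor : A ^ p = A ^ (p - 1) * A := by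
    nth_rw 3 [← CFC.rpow_one A]
    rw [rpow_mul_rpow_of_add_ne_zero (by simpa using hp), sub_add_cancel]
  rw [factor, Matrix.mul_assoc, h]

lemma re_trace_sandwich_mul_rpow_le {Q : Matrix n n 𝕜} (hQ : 0 ≤ Q) (T : Matrix n n 𝕜) {p : ℝ}
    (hp : p ≠ 0) : re (T ^ p * Q * T ^ p * T ^ (-(2 * p))).trace ≤ re Q.trace := by
  have cancel : T ^ p * T ^ (-(2 * p)) * T ^ p = supportProj T := by
    rw [rpow_mul_rpow_of_add_ne_zero (by simpa [two_mul] using hp),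
      ← rpow_mul_rpow_neg T (neg_ne_zero.2 hp)]
    ring_nf
  calc re (T ^ p * Q * T ^ p * T ^ (-(2 * p))).trace = re (Q * supportProj T).trace := by
        rw [← cancel, Matrix.mul_assoc, Matrix.mul_assoc, Matrix.trace_mul_comm]
        simp only [Matrix.mul_assoc]
    _ ≤ re (Q * 1).trace := re_trace_mul_le_re_trace_mul hQ (supportProj_le_one T)
    _ = re Q.trace := by rw [mul_one]

lemma re_trace_sandwich_rpow_le {Q T : Matrix n n 𝕜} {α : ℝ} (hα₀ : 0 < α) (hα₁ : α < 1)
    (hQ : 0 ≤ Q) (hT : 0 ≤ T) :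
    re ((T ^ ((1 - α) / (2 * α)) * Q * T ^ ((1 - α) / (2 * α))) ^ α).trace ≤
      re Q.trace ^ α * re T.trace ^ (1 - α) := by
  have one_sub_pos : 0 < 1 - α := sub_pos.2 hα₁
  set p := (1 - α) / (2 * α) with hp
  have p_ne : p ≠ 0 := by positivity
  set M := T ^ p * Q * T ^ p
  have hM : 0 ≤ M := conjugate_nonneg_of_nonneg hQ CFC.rpow_nonneg
  have M_supp : M ^ α * supportProj T = M ^ α :=
    rpow_mul_eq_of_mul_eq hM (by rw [Matrix.mul_assoc, rpow_mul_supportProj T p_ne]) hα₀.ne'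
  have M_eq : cfc (fun x : ℝ≥0 => x ^ α * 1 ^ (1 - α)) M = M ^ α := by
    simp only [CFC.rpow_def, NNReal.one_rpow, mul_one]
  have T_eq : cfc (fun x : ℝ≥0 => (x ^ (-(2 * p))) ^ α * x ^ (1 - α)) T = supportProj T := by
    have exponent : -(2 * p) * α = -(1 - α) := by rw [hp]; field_simp
    rw [← rpow_mul_rpow_neg T (neg_ne_zero.2 one_sub_pos.ne'), neg_neg]
    simp only [CFC.rpow_def, matrix_cfc_mul_cfc, ← NNReal.rpow_mul, exponent]
  have holder := re_trace_cfc_mul_cfc_le_rpow_mul_rpow hα₀ hα₁ (fun x => x) (fun _ => 1)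
    (fun x => x ^ (-(2 * p))) (fun x => x) hM hT
  rw [M_eq, T_eq, M_supp, cfc_id' ℝ≥0 M, cfc_id' ℝ≥0 T, cfc_const_one ℝ≥0 M, one_mul,
    ← CFC.rpow_def] at holder
  exact holder.trans (mul_le_mul_of_nonneg_right
    (Real.rpow_le_rpow (re_trace_mul_nonneg hM CFC.rpow_nonneg)
      (re_trace_sandwich_mul_rpow_le hQ T p_ne) hα₀.le)
    (Real.rpow_nonneg (re_trace_nonneg hT) _))

end MatrixInequalities

section Kronecker

variable {𝕜 a b : Type*} [RCLike 𝕜] [Fintype a] [DecidableEq a] [Fintype b] [DecidableEq b]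

/-- The embedding `B ↦ 1 ⊗ B` of the second tensor factor, as a star algebra homomorphism so that it
commutes with the functional calculus. -/
def oneKroneckerHom : Matrix b b 𝕜 →⋆ₐ[𝕜] Matrix (a × b) (a × b) 𝕜 where
  toFun B := (1 : Matrix a a 𝕜) ⊗ₖ B
  map_one' := one_kronecker_one
  map_mul' B C := by rw [← mul_kronecker_mul, one_mul]
  map_zero' := kronecker_zero _
  map_add' := kronecker_add _
  commutes' r := by simp only [Algebra.algebraMap_eq_smul_one, kronecker_smul, one_kronecker_one]
  map_star' B := by simp only [star_eq_conjTranspose, conjTranspose_kronecker, conjTranspose_one]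

lemma one_kronecker_rpow {B : Matrix b b 𝕜} (hB : B.PosSemidef) (p : ℝ) :
    (1 : Matrix a a 𝕜) ⊗ₖ (B ^ p) = ((1 : Matrix a a 𝕜) ⊗ₖ B) ^ p :=
  StarAlgHom.map_cfc (oneKroneckerHom (a := a)) (fun x : ℝ≥0 => x ^ p) B
    (matrix_continuousOn_spectrum B _)
    (continuous_matrix fun _ _ => continuous_const.mul (continuous_id.matrix_elem _ _))
    hB.nonneg (PosSemidef.one.kronecker hB).nonneg

end Kronecker

section SandwichedTrace

variable {a b : Type*} [Fintype a] [DecidableEq a] [Fintype b] [DecidableEq b]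

lemma sandTr_eq_re_trace_rpow (α : ℝ) {ρ : Matrix (a × b) (a × b) ℂ} {η : Matrix b b ℂ}
    (hρ : ρ.PosSemidef) (hη : η.PosSemidef) :
    sandTr α ρ η = re ((((1 : Matrix a a ℂ) ⊗ₖ η) ^ ((1 - α) / (2 * α)) * ρ *
      ((1 : Matrix a a ℂ) ⊗ₖ η) ^ ((1 - α) / (2 * α))) ^ α).trace := by
  have sandwich := conjugate_nonneg_of_nonneg hρ.nonneg
    (CFC.rpow_nonneg (a := (1 : Matrix a a ℂ) ⊗ₖ η) (y := (1 - α) / (2 * α)))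
  rw [sandTr, mpow_eq_rpow hη, one_kronecker_rpow hη,
    mpow_eq_rpow (nonneg_iff_posSemidef.1 sandwich), re_eq_complex_re]

lemma sandTr_nonneg (α : ℝ) {ρ : Matrix (a × b) (a × b) ℂ} {η : Matrix b b ℂ}
    (hρ : ρ.PosSemidef) (hη : η.PosSemidef) : 0 ≤ sandTr α ρ η := by
  rw [sandTr_eq_re_trace_rpow α hρ hη]
  exact re_trace_nonneg CFC.rpow_nonneg

lemma sandTr_add_le {α : ℝ} (hα₀ : 0 < α) (hα₁ : α < 1) {ρ σ : Matrix (a × b) (a × b) ℂ}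
    {η : Matrix b b ℂ} (hρ : ρ.PosSemidef) (hσ : σ.PosSemidef) (hη : η.PosSemidef) :
    sandTr α (ρ + σ) η ≤ sandTr α ρ η + sandTr α σ η := by
  rw [sandTr_eq_re_trace_rpow α (hρ.add hσ) hη, sandTr_eq_re_trace_rpow α hρ hη,
    sandTr_eq_re_trace_rpow α hσ hη, mul_add, add_mul]
  exact re_trace_add_rpow_le hα₀ hα₁ (conjugate_nonneg_of_nonneg hρ.nonneg CFC.rpow_nonneg)
    (conjugate_nonneg_of_nonneg hσ.nonneg CFC.rpow_nonneg)

lemma sandTr_le {α : ℝ} (hα₀ : 0 < α) (hα₁ : α < 1) {ρ : Matrix (a × b) (a × b) ℂ}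
    {η : Matrix b b ℂ} (hρ : ρ.PosSemidef) (hη : IsDensity η) :
    sandTr α ρ η ≤ ρ.trace.re ^ α * (Fintype.card a : ℝ) ^ (1 - α) := by
  rw [sandTr_eq_re_trace_rpow α hρ hη.1]
  simpa [trace_kronecker, hη.2] using re_trace_sandwich_rpow_le hα₀ hα₁ hρ.nonneg
    (PosSemidef.one.kronecker hη.1 : PosSemidef ((1 : Matrix a a ℂ) ⊗ₖ η)).nonneg

lemma bddAbove_range_logb_sandTr {α : ℝ} (hα₀ : 0 < α) (hα₁ : α < 1)
    {ρ : Matrix (a × b) (a × b) ℂ} (hρ : ρ.PosSemidef) :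
    BddAbove (Set.range fun η : {η : Matrix b b ℂ // IsDensity η} =>
      1 / (1 - α) * Real.logb 2 (sandTr α ρ η)) := by
  refine ⟨1 / (1 - α) * (ρ.trace.re ^ α * (Fintype.card a : ℝ) ^ (1 - α) / Real.log 2), ?_⟩
  rintro _ ⟨η, rfl⟩
  have log_le := (Real.log_le_self (sandTr_nonneg α hρ η.2.1)).trans (sandTr_le hα₀ hα₁ hρ η.2)
  exact mul_le_mul_of_nonneg_left
    (div_le_div_of_nonneg_right log_le (Real.log_nonneg one_le_two))
    (one_div_nonneg.2 (sub_nonneg.2 hα₁.le))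

lemma sandTr_le_two_rpow_Hcond {α : ℝ} (hα₀ : 0 < α) (hα₁ : α < 1)
    {ρ : Matrix (a × b) (a × b) ℂ} {η : Matrix b b ℂ} (hρ : ρ.PosSemidef) (hη : IsDensity η) :
    sandTr α ρ η ≤ 2 ^ ((1 - α) * Hcond α ρ) := by
  rcases (sandTr_nonneg α hρ hη.1).eq_or_lt with sandTr_zero | sandTr_pos
  · rw [← sandTr_zero]
    positivity
  · have le_Hcond : 1 / (1 - α) * Real.logb 2 (sandTr α ρ η) ≤ Hcond α ρ :=
      le_ciSup (bddAbove_range_logb_sandTr hα₀ hα₁ hρ) ⟨η, hη⟩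
    rwa [← Real.logb_le_iff_le_rpow one_lt_two sandTr_pos, ← div_le_iff₀' (sub_pos.2 hα₁),
      div_eq_inv_mul, ← one_div]

theorem sandTr_upper_bound_general {α : ℝ} (hα₀ : 0 < α) (hα₁ : α < 1)
    {ρ Q : Matrix (a × b) (a × b) ℂ} (hρ : ρ.PosSemidef) (hQ : Q.PosSemidef)
    {η : Matrix b b ℂ} (hη : IsDensity η) :
    sandTr α (ρ + Q) η ≤
      2 ^ ((1 - α) * Hcond α ρ) + Q.trace.re ^ α * (Fintype.card a : ℝ) ^ (1 - α) :=
  (sandTr_add_le hα₀ hα₁ hρ hQ hη.1).trans <|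
    add_le_add (sandTr_le_two_rpow_Hcond hα₀ hα₁ hρ hη) (sandTr_le hα₀ hα₁ hQ hη)

end SandwichedTrace

/-- Intermediate upper bound: for any conditioning state `η`,
`tr((η^{-α'/2}(σ + εP)η^{-α'/2})^α) ≤ 2^{(1-α)H̃_α^↑(A|B)_ρ} + ε^α d_A^{1-α}`. -/
theorem sandTr_upper_bound {dA dB : ℕ} (α : ℝ) (hα : α ∈ Set.Ico (1/2 : ℝ) 1)
    (ρ σ P Q : Matrix (Fin dA × Fin dB) (Fin dA × Fin dB) ℂ)
    (hρ : IsDensity ρ) (hσ : IsDensity σ) (hP : IsDensity P) (hQ : IsDensity Q)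
    (ε : ℝ) (hε : 0 < ε) (heq : σ + ε • P = ρ + ε • Q)
    (η : Matrix (Fin dB) (Fin dB) ℂ) (hη : IsDensity η) :
    sandTr α (σ + ε • P) η ≤
      (2:ℝ) ^ ((1 - α) * Hcond α ρ) + ε ^ α * (dA : ℝ) ^ (1 - α) := by
  rw [heq]
  simpa [trace_smul, hQ.2] using sandTr_upper_bound_general (one_half_pos.trans_le hα.1) hα.2
    hρ.1 (hQ.1.smul hε.le) hη
end

section
/- For α ∈ [1/2, 1) ∪ (1, ∞], the sandwiched Rényi relative entropy D̃_α satisfies the data processing inequality: for any completely positive trace-preserving map Φ and positive operators P, Q with tr(P) ≠ 0, D̃_α(P‖Q) ≥ D̃_α(Φ(P)‖Φ(Q)). -/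
open Matrix MeasureTheory
open scoped Kronecker ComplexOrder Classical

/-- The sandwiched Rényi relative entropy `D̃_α(P‖Q)`, valued in `EReal`. -/
noncomputable def Dtilde {n : Type*} [Fintype n] [DecidableEq n]
    (α : ℝ) (P Q : Matrix n n ℂ) : EReal :=
  if (α < 1 ∧ P * Q ≠ 0) ∨ (∀ v : n → ℂ, Q.mulVec v = 0 → P.mulVec v = 0) then
    (((1/(α-1)) * Real.logb 2
      ((mpow (mpow Q ((1-α)/(2*α)) * P * mpow Q ((1-α)/(2*α))) α).trace.re
        / P.trace.re) : ℝ) : EReal)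
  else ⊤

/-- `Φ ⊗ id_k` applied entrywise, used to define complete positivity. -/
def mapTensorId {n m : Type*} [Fintype n] [DecidableEq n] [Fintype m] [DecidableEq m]
    (Φ : Matrix n n ℂ →ₗ[ℂ] Matrix m m ℂ) (k : ℕ)
    (X : Matrix (n × Fin k) (n × Fin k) ℂ) : Matrix (m × Fin k) (m × Fin k) ℂ :=
  Matrix.of fun p q => Φ (Matrix.of fun c d => X (c, p.2) (d, q.2)) p.1 q.1

/-- A completely positive trace-preserving map. -/
def IsCPTP {n m : Type*} [Fintype n] [DecidableEq n] [Fintype m] [DecidableEq m]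
    (Φ : Matrix n n ℂ →ₗ[ℂ] Matrix m m ℂ) : Prop :=
  (∀ (k : ℕ) (X : Matrix (n × Fin k) (n × Fin k) ℂ),
      X.PosSemidef → (mapTensorId Φ k X).PosSemidef) ∧
  ∀ X : Matrix n n ℂ, (Φ X).trace = X.trace

/-!
Complex interpolation. Put `A = Q ^ s * P * Q ^ s` and `B = Φ(Q) ^ s * Φ(P) * Φ(Q) ^ s`, where
`s = (1 - α) / (2 * α)`; the claim compares `tr A ^ α` with `tr B ^ α`. Write `P = Xᴴ * X`, and let
`T = X * Q ^ s * A ^ ((α - 1) / 2)` and `N = Φ(Q) ^ s * B ^ ((α - 1) / 2)`, so that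
`Tᴴ * T = A ^ α` and `Nᴴ * Φ(P) * N = B ^ α`. The entire function
`f(z) = tr(Nᴴ * Φ(Xᴴ * T * A ^ (-α z / 2) * Q ^ (z / 2)) * Φ(Q) ^ (-z / 2) * B ^ (α z / 2))`
is estimated by the Cauchy-Schwarz inequality for the form `(Y, M) ↦ tr(Mᴴ * Φ(Yᴴ * Y) * M)`,
which expresses the positivity of `Φ ⊗ id` on `2 × 2` blocks. On `re z = 0` this gives
`(tr B ^ α * tr A ^ α) ^ (1 / 2)`, because imaginary powers are contractions and `Φ` preserves the
trace. On `re z = 1` it gives `tr B ^ α`, because the powers of `Q` and `Φ(Q)` cancel through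
`Φ(Y) ≤ Φ(Q)` for `Y ≤ Q`. By the three lines theorem
`|f(θ)| ≤ (tr B ^ α) ^ ((1 + θ) / 2) * (tr A ^ α) ^ ((1 - θ) / 2)`.

The value of `f` at one point of the strip is a trace to be compared: `f(1 - 1 / α) = tr B ^ α` for
`α > 1`, whence `tr B ^ α ≤ tr A ^ α`, and `f(1 / α - 1) = tr A ^ α` for `1 / 2 ≤ α < 1`, whence
`tr A ^ α ≤ tr B ^ α`. Kernels are harmless because all powers are taken on supports.
-/

open scoped MatrixOrder Matrix.Norms.L2Operator

section Trace

variable {n : Type*} [Fintype n]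

lemma re_trace_mono {X Y : Matrix n n ℂ} (h : X ≤ Y) : X.trace.re ≤ Y.trace.re :=
  (Complex.le_def.1 (OrderHomClass.mono (tracePositiveLinearMap n ℂ ℂ) h)).1

lemma re_trace_nonneg_s6 {A : Matrix n n ℂ} (hA : A.PosSemidef) :
    0 ≤ A.trace.re :=
  (Complex.nonneg_iff.1 hA.trace_nonneg).1

lemma ker_le_ker_of_le_smul {P Q : Matrix n n ℂ} (hP : P.PosSemidef) {c : ℝ}
    (h : P ≤ c • Q) (v : n → ℂ) (hv : Q.mulVec v = 0) : P.mulVec v = 0 := by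
  rw [← hP.dotProduct_mulVec_zero_iff]
  refine le_antisymm ?_ (hP.dotProduct_mulVec_nonneg v)
  simpa [sub_mulVec, smul_mulVec, hv] using (le_iff.1 h).dotProduct_mulVec_nonneg v

end Trace

/-- The complex power `|x| ^ z` on the support of `x`: it vanishes at `x = 0` for every exponent,
so that `z = 0` gives the indicator of `x ≠ 0`. -/
noncomputable def supportCpow (x : ℝ) (z : ℂ) : ℂ :=
  if x = 0 then 0 else Complex.exp (z * Real.log x)

lemma supportCpow_mul_supportCpow (x : ℝ) (z w : ℂ) :
    supportCpow x z * supportCpow x w = supportCpow x (z + w) := by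
  unfold supportCpow
  split_ifs
  · exact mul_zero 0
  · rw [← Complex.exp_add, add_mul]

lemma star_supportCpow (x : ℝ) (z : ℂ) : star (supportCpow x z) = supportCpow x (star z) := by
  unfold supportCpow
  split_ifs
  · exact star_zero ℂ
  · simp only [Complex.star_def, ← Complex.exp_conj, map_mul, Complex.conj_ofReal]

lemma supportCpow_ofReal {x p : ℝ} (hx : 0 ≤ x) (hp : p ≠ 0) :
    supportCpow x p = ((x ^ p : ℝ) : ℂ) := by
  unfold supportCpow
  split_ifs with h
  · rw [h, Real.zero_rpow hp, Complex.ofReal_zero]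
  · rw [Real.rpow_def_of_pos (hx.lt_of_ne' h), mul_comm]
    push_cast
    rfl

lemma differentiable_supportCpow (x : ℝ) : Differentiable ℂ (supportCpow x) := by
  unfold supportCpow
  split_ifs <;> fun_prop

/-- The complex power of a Hermitian matrix taken on its support: `supportPow A 0` is the projection
onto the range of `A`, and negative powers are generalized inverses. As for `mpow`, the value at a
non-Hermitian matrix is `0`. -/
noncomputable def supportPow {n : Type*} [Fintype n] [DecidableEq n] (A : Matrix n n ℂ) (z : ℂ) :
    Matrix n n ℂ :=
  if hA : A.IsHermitian then
    Unitary.conjStarAlgAut ℂ (Matrix n n ℂ) hA.eigenvectorUnitary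
      (diagonal fun i => supportCpow (hA.eigenvalues i) z)
  else 0

local infixr:75 " ^ˢ " => supportPow

section SupportPow

variable {l n : Type*} [Fintype l] [Fintype n] [DecidableEq n] {A : Matrix n n ℂ}

lemma supportPow_mul_supportPow (A : Matrix n n ℂ) (z w : ℂ) :
    A ^ˢ z * A ^ˢ w = A ^ˢ (z + w) := by
  unfold supportPow
  split_ifs
  · simp only [← map_mul, diagonal_mul_diagonal, supportCpow_mul_supportCpow]
  · exact mul_zero 0

lemma supportPow_mul_of_add_eq (A : Matrix n n ℂ) {z w u : ℂ} (h : z + w = u) :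
    A ^ˢ z * A ^ˢ w = A ^ˢ u := by
  rw [supportPow_mul_supportPow, h]

lemma conjTranspose_supportPow (A : Matrix n n ℂ) (z : ℂ) : (A ^ˢ z)ᴴ = A ^ˢ star z := by
  unfold supportPow
  split_ifs
  · simp only [← star_eq_conjTranspose, ← map_star]
    simp only [star_eq_conjTranspose, diagonal_conjTranspose, Pi.star_def, star_supportCpow]
  · exact conjTranspose_zero

lemma conjTranspose_supportPow_ofReal (A : Matrix n n ℂ) (r : ℝ) :
    (A ^ˢ (r : ℂ))ᴴ = A ^ˢ (r : ℂ) := by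
  rw [conjTranspose_supportPow, Complex.star_def, Complex.conj_ofReal]

lemma mpow_eq_supportPow (hA : A.PosSemidef) {p : ℝ} (hp : p ≠ 0) : mpow A p = A ^ˢ (p : ℂ) := by
  unfold mpow supportPow
  simp only [dif_pos hA.isHermitian, Unitary.conjStarAlgAut_apply,
    supportCpow_ofReal (hA.eigenvalues_nonneg _) hp]

lemma supportPow_one (hA : A.PosSemidef) : A ^ˢ 1 = A := by
  have hdiag (i : n) : supportCpow (hA.isHermitian.eigenvalues i) 1 =
      (hA.isHermitian.eigenvalues i : ℂ) := by
    simpa using supportCpow_ofReal (hA.eigenvalues_nonneg i) one_ne_zero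
  simp only [supportPow, dif_pos hA.isHermitian, hdiag]
  exact hA.isHermitian.spectral_theorem.symm

lemma self_mul_supportPow (hA : A.PosSemidef) (z : ℂ) : A * A ^ˢ z = A ^ˢ (1 + z) := by
  nth_rw 1 [← supportPow_one hA]
  exact supportPow_mul_supportPow A 1 z

lemma supportPow_mul_self (hA : A.PosSemidef) (z : ℂ) : A ^ˢ z * A = A ^ˢ (z + 1) := by
  nth_rw 2 [← supportPow_one hA]
  exact supportPow_mul_supportPow A z 1

lemma supportPow_mul_conjTranspose_self (A : Matrix n n ℂ) (z : ℂ) :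
    A ^ˢ z * (A ^ˢ z)ᴴ = A ^ˢ ((2 * z.re : ℝ) : ℂ) := by
  rw [conjTranspose_supportPow, supportPow_mul_supportPow, Complex.star_def, Complex.add_conj]

lemma conjTranspose_supportPow_mul_mul (A : Matrix n n ℂ) (z w : ℂ) :
    (A ^ˢ z)ᴴ * A ^ˢ w * A ^ˢ z = A ^ˢ (w + (2 * z.re : ℝ)) := by
  rw [conjTranspose_supportPow, supportPow_mul_supportPow, supportPow_mul_supportPow,
    ← Complex.add_conj, Complex.star_def]
  ring_nf

lemma conjTranspose_supportPow_mul_self (A : Matrix n n ℂ) (z : ℂ) :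
    (A ^ˢ z)ᴴ * A ^ˢ z = A ^ˢ ((2 * z.re : ℝ) : ℂ) := by
  rw [conjTranspose_supportPow, supportPow_mul_supportPow, add_comm, Complex.star_def,
    Complex.add_conj]

lemma posSemidef_supportPow_ofReal (A : Matrix n n ℂ) (r : ℝ) : (A ^ˢ (r : ℂ)).PosSemidef := by
  have hsq := conjTranspose_supportPow_mul_self A ((r / 2 : ℝ) : ℂ)
  rw [Complex.ofReal_re, mul_div_cancel₀ r two_ne_zero] at hsq
  exact hsq ▸ posSemidef_conjTranspose_mul_self _

lemma isStarProjection_supportPow_zero (A : Matrix n n ℂ) : IsStarProjection (A ^ˢ 0) where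
  isIdempotentElem := supportPow_mul_of_add_eq A (add_zero 0)
  isSelfAdjoint := (conjTranspose_supportPow A 0).trans (by rw [star_zero])

lemma self_mul_supportPow_zero (hA : A.PosSemidef) : A * A ^ˢ 0 = A := by
  rw [self_mul_supportPow hA, add_zero, supportPow_one hA]

lemma mul_supportPow_zero_eq_self_iff {C : Matrix l n ℂ} :
    C * A ^ˢ 0 = C ↔ Cᴴ * C * A ^ˢ 0 = Cᴴ * C := by
  have h := conjTranspose_mul_self_mul_eq_zero C (1 - A ^ˢ 0)
  rw [Matrix.mul_sub, Matrix.mul_one, Matrix.mul_sub, Matrix.mul_one, sub_eq_zero,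
    sub_eq_zero] at h
  exact ⟨fun hC => (h.2 hC.symm).symm, fun hC => (h.1 hC.symm).symm⟩

lemma mul_supportPow_zero_conjTranspose_mul_self (C : Matrix l n ℂ) : C * (Cᴴ * C) ^ˢ 0 = C :=
  mul_supportPow_zero_eq_self_iff.2
    (self_mul_supportPow_zero (posSemidef_conjTranspose_mul_self C))

lemma re_trace_supportPow_pos_iff (hA : A.PosSemidef) {r : ℝ} :
    0 < (A ^ˢ (r : ℂ)).trace.re ↔ A ≠ 0 := by
  have hr := posSemidef_supportPow_ofReal A r
  rw [(re_trace_nonneg_s6 hr).lt_iff_ne', not_iff_not]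
  refine ⟨fun htr => ?_, fun h => ?_⟩
  · have hpow : A ^ˢ (r : ℂ) = 0 := by
      rw [← hr.trace_eq_zero_iff, Complex.ext_iff]
      exact ⟨htr, (Complex.nonneg_iff.1 hr.trace_nonneg).2.symm⟩
    rw [← supportPow_one hA, ← supportPow_mul_of_add_eq A (add_sub_cancel (r : ℂ) 1), hpow,
      zero_mul]
  · rw [← add_sub_cancel 1 (r : ℂ), ← self_mul_supportPow hA, h, zero_mul, trace_zero,
      Complex.zero_re]

lemma re_trace_conj_supportPow_le {S : Matrix n n ℂ} (hS : S.PosSemidef) (A : Matrix n n ℂ) {z : ℂ}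
    (hz : z.re = 0) : ((A ^ˢ z)ᴴ * S * A ^ˢ z).trace.re ≤ S.trace.re := by
  obtain ⟨Y, rfl⟩ := CStarAlgebra.nonneg_iff_eq_star_mul_self.1 hS.nonneg
  have hproj : A ^ˢ z * (A ^ˢ z)ᴴ ≤ 1 := by
    rw [supportPow_mul_conjTranspose_self, hz, mul_zero, Complex.ofReal_zero]
    exact (isStarProjection_supportPow_zero A).le_one
  calc ((A ^ˢ z)ᴴ * (Yᴴ * Y) * A ^ˢ z).trace.re
      = (Y * (A ^ˢ z * (A ^ˢ z)ᴴ) * Yᴴ).trace.re := by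
        rw [← mul_assoc, mul_assoc, trace_mul_comm]
        simp only [mul_assoc]
    _ ≤ (Y * 1 * Yᴴ).trace.re := re_trace_mono (star_right_conjugate_le_conjugate hproj Y)
    _ = (Yᴴ * Y).trace.re := by rw [mul_one, trace_mul_comm]

end SupportPow

section Support

variable {n : Type*} [Fintype n] [DecidableEq n] {P Q : Matrix n n ℂ}

lemma ker_le_ker_iff_mul_supportPow_zero (hQ : Q.PosSemidef) :
    (∀ v : n → ℂ, Q.mulVec v = 0 → P.mulVec v = 0) ↔ P * Q ^ˢ 0 = P := by
  refine ⟨fun h => ?_, fun h v hv => ?_⟩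
  · rw [← sub_eq_zero, ← neg_eq_zero, neg_sub]
    refine ext_of_mulVec_single fun i => ?_
    have hQker : Q *ᵥ ((1 - Q ^ˢ 0) *ᵥ Pi.single i 1) = 0 := by
      rw [mulVec_mulVec, mul_sub, mul_one, self_mul_supportPow_zero hQ, sub_self, zero_mulVec]
    simpa only [mulVec_mulVec, mul_sub, mul_one, zero_mulVec] using h _ hQker
  · rw [← h, ← neg_add_cancel (1 : ℂ), ← supportPow_mul_self hQ, ← mulVec_mulVec, ← mulVec_mulVec,
      hv, mulVec_zero, mulVec_zero]

lemma exists_le_smul_of_mul_supportPow_zero (hP : P.PosSemidef) (hQ : Q.PosSemidef)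
    (h : P * Q ^ˢ 0 = P) : ∃ c : ℝ, P ≤ c • Q := by
  have hsqrt := conjTranspose_supportPow_ofReal Q (1 / 2)
  have hinv := conjTranspose_supportPow_ofReal Q (-(1 / 2))
  set R := Q ^ˢ ((1 / 2 : ℝ) : ℂ)
  set R' := Q ^ˢ ((-(1 / 2) : ℝ) : ℂ)
  have hRR' : R' * R = Q ^ˢ 0 := supportPow_mul_of_add_eq Q (by push_cast; ring)
  have hRR : R * R = Q := by
    rw [supportPow_mul_of_add_eq Q (by push_cast; ring : _ = (1 : ℂ)), supportPow_one hQ]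
  have hPR : Rᴴ * (R'ᴴ * P * R') * R = P := by
    have h' : (Q ^ˢ 0)ᴴ * P = P := by
      simpa only [conjTranspose_mul, hP.isHermitian.eq] using congrArg conjTranspose h
    calc Rᴴ * (R'ᴴ * P * R') * R = (R' * R)ᴴ * P * (R' * R) := by
          simp only [conjTranspose_mul, mul_assoc]
      _ = P := by rw [hRR', h', h]
  have hle := CStarAlgebra.star_left_conjugate_le_norm_smul (a := R) (b := R'ᴴ * P * R')
    (hP.conjTranspose_mul_mul_same R').isHermitian
  rw [star_eq_conjTranspose, hPR, hsqrt, hRR] at hle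
  exact ⟨_, hle⟩

lemma mul_ne_zero_of_ker_le_ker {ι : Type*} [Fintype ι] {P Q : Matrix ι ι ℂ} (hQ : Q.PosSemidef)
    (hP0 : P ≠ 0) (h : ∀ v : ι → ℂ, Q.mulVec v = 0 → P.mulVec v = 0) : P * Q ≠ 0 := by
  refine fun hPQ => hP0 ?_
  rw [← (ker_le_ker_iff_mul_supportPow_zero hQ).1 h, ← add_neg_cancel (1 : ℂ),
    ← self_mul_supportPow hQ, ← mul_assoc, hPQ, zero_mul]

end Support

section KPositive

variable {l n m o : Type*} [Fintype l] [Fintype n] [DecidableEq n] [Fintype m] [DecidableEq m]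
  [Fintype o] {Φ : Matrix n n ℂ →ₗ[ℂ] Matrix m m ℂ} {k : ℕ}

/-- `k`-positivity: the map `Φ ⊗ id_k` is positive. A map is completely positive when it is
`k`-positive for every `k`. -/
def IsKPositive (k : ℕ) (Φ : Matrix n n ℂ →ₗ[ℂ] Matrix m m ℂ) : Prop :=
  ∀ X : Matrix (n × Fin k) (n × Fin k) ℂ, X.PosSemidef → (mapTensorId Φ k X).PosSemidef

namespace IsKPositive

lemma map_posSemidef [NeZero k] (hΦ : IsKPositive k Φ) {X : Matrix n n ℂ} (hX : X.PosSemidef) :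
    (Φ X).PosSemidef :=
  (hΦ _ (hX.submatrix Prod.fst)).submatrix fun p => (p, 0)

lemma map_mono [NeZero k] (hΦ : IsKPositive k Φ) {X Y : Matrix n n ℂ} (h : X ≤ Y) : Φ X ≤ Φ Y := by
  rw [le_iff, ← map_sub]
  exact hΦ.map_posSemidef (le_iff.1 h)

lemma posSemidef_gram (hΦ : IsKPositive k Φ) (X : Fin k → Matrix l n ℂ)
    (N : Fin k → Matrix m o ℂ) :
    (of fun i j => ((N i)ᴴ * Φ ((X i)ᴴ * X j) * N j).trace).PosSemidef := by
  let Z : Matrix l (n × Fin k) ℂ := of fun a c => X c.2 a c.1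
  let V (q : o) : Matrix (m × Fin k) (Fin k) ℂ := of fun p i => if p.2 = i then N i p.1 q else 0
  have hmap (p p' : m × Fin k) :
      mapTensorId Φ k (Zᴴ * Z) p p' = Φ ((X p.2)ᴴ * X p'.2) p.1 p'.1 := rfl
  have hsum : (of fun i j => ((N i)ᴴ * Φ ((X i)ᴴ * X j) * N j).trace) =
      ∑ q, (V q)ᴴ * mapTensorId Φ k (Zᴴ * Z) * V q := by
    ext i j
    simp [Matrix.sum_apply, mul_apply, trace, hmap, V, Fintype.sum_prod_type, apply_ite star]
  rw [hsum]
  exact posSemidef_sum _ fun q _ =>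
    (hΦ _ (posSemidef_conjTranspose_mul_self Z)).conjTranspose_mul_mul_same (V q)

lemma norm_trace_sq_le (hΦ : IsKPositive 2 Φ) (X Y : Matrix l n ℂ) (N M : Matrix m o ℂ) :
    ‖(Nᴴ * Φ (Xᴴ * Y) * M).trace‖ ^ 2 ≤
      (Nᴴ * Φ (Xᴴ * X) * N).trace.re * (Mᴴ * Φ (Yᴴ * Y) * M).trace.re := by
  have hgram := hΦ.posSemidef_gram ![X, Y] ![N, M]
  have hsymm : star (Nᴴ * Φ (Xᴴ * Y) * M).trace = (Mᴴ * Φ (Yᴴ * X) * N).trace :=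
    hgram.isHermitian.apply 1 0
  have hXX : 0 ≤ (Nᴴ * Φ (Xᴴ * X) * N).trace := hgram.diag_nonneg (i := 0)
  have hdet : 0 ≤ (Nᴴ * Φ (Xᴴ * X) * N).trace * (Mᴴ * Φ (Yᴴ * Y) * M).trace -
      (Nᴴ * Φ (Xᴴ * Y) * M).trace * (Mᴴ * Φ (Yᴴ * X) * N).trace :=
    hgram.det_nonneg.trans_eq (det_fin_two _)
  rw [← hsymm, Complex.star_def, Complex.mul_conj', sub_nonneg, ← Complex.ofReal_pow] at hdet
  simpa only [Complex.ofReal_re, Complex.mul_re, ← (Complex.nonneg_iff.1 hXX).2, zero_mul,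
    sub_zero] using (Complex.le_def.1 hdet).1

lemma conjTranspose_mul_map_eq_zero (hΦ : IsKPositive 2 Φ) {X : Matrix l n ℂ} {N : Matrix m m ℂ}
    (h : Nᴴ * Φ (Xᴴ * X) * N = 0) (Y : Matrix l n ℂ) : Nᴴ * Φ (Xᴴ * Y) = 0 := by
  have hCS := hΦ.norm_trace_sq_le X Y N (Nᴴ * Φ (Xᴴ * Y))ᴴ
  rw [h, trace_zero, Complex.zero_re, zero_mul] at hCS
  rw [← trace_mul_conjTranspose_self_eq_zero_iff, ← norm_eq_zero]
  exact (sq_nonpos_iff _).1 hCS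

lemma map_mul_eq_zero (hΦ : IsKPositive 2 Φ) {Y : Matrix l n ℂ} {M : Matrix m m ℂ}
    (h : Mᴴ * Φ (Yᴴ * Y) * M = 0) (X : Matrix l n ℂ) : Φ (Xᴴ * Y) * M = 0 := by
  have hCS := hΦ.norm_trace_sq_le X Y (Φ (Xᴴ * Y) * M) M
  rw [h, trace_zero, Complex.zero_re, mul_zero, Matrix.mul_assoc] at hCS
  rw [← trace_conjTranspose_mul_self_eq_zero_iff, ← norm_eq_zero]
  exact (sq_nonpos_iff _).1 hCS

lemma ker_le_ker [NeZero k] (hΦ : IsKPositive k Φ) {P Q : Matrix n n ℂ} (hP : P.PosSemidef)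
    (hQ : Q.PosSemidef) (h : ∀ v : n → ℂ, Q.mulVec v = 0 → P.mulVec v = 0) (v : m → ℂ)
    (hv : (Φ Q).mulVec v = 0) : (Φ P).mulVec v = 0 := by
  obtain ⟨c, hc⟩ := exists_le_smul_of_mul_supportPow_zero hP hQ
    ((ker_le_ker_iff_mul_supportPow_zero hQ).1 h)
  have hmap := hΦ.map_mono hc
  rw [LinearMap.map_smul_of_tower] at hmap
  exact ker_le_ker_of_le_smul (hΦ.map_posSemidef hP) hmap v hv

lemma supportPow_zero_mul_map (hΦ : IsKPositive 2 Φ) (X Y : Matrix l n ℂ) (K : Matrix m m ℂ) :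
    (Kᴴ * Φ (Xᴴ * X) * K) ^ˢ 0 * (Kᴴ * Φ (Xᴴ * Y)) = Kᴴ * Φ (Xᴴ * Y) := by
  have hB : (Kᴴ * Φ (Xᴴ * X) * K).PosSemidef :=
    (hΦ.map_posSemidef (posSemidef_conjTranspose_mul_self X)).conjTranspose_mul_mul_same K
  set B := Kᴴ * Φ (Xᴴ * X) * K
  have hconj (G : Matrix m m ℂ) : (K * G)ᴴ * Φ (Xᴴ * X) * (K * G) = Gᴴ * (B * G) := by
    simp only [B, conjTranspose_mul, mul_assoc]
  have hker : (K * (1 - B ^ˢ 0))ᴴ * Φ (Xᴴ * X) * (K * (1 - B ^ˢ 0)) = 0 := by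
    rw [hconj, mul_sub, mul_one, self_mul_supportPow_zero hB, sub_self, mul_zero]
  have hzero := hΦ.conjTranspose_mul_map_eq_zero hker Y
  rw [conjTranspose_mul, conjTranspose_sub, conjTranspose_one, conjTranspose_supportPow, star_zero,
    mul_assoc, sub_mul, one_mul, sub_eq_zero] at hzero
  exact hzero.symm

lemma map_mul_supportPow_zero (hΦ : IsKPositive 2 Φ) {Q : Matrix n n ℂ} (hQ : Q.PosSemidef)
    (X : Matrix l n ℂ) {Y : Matrix l n ℂ} (hY : Y * Q ^ˢ 0 = Y) :
    Φ (Xᴴ * Y) * Φ Q ^ˢ 0 = Φ (Xᴴ * Y) := by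
  have hYY : Φ (Yᴴ * Y) * Φ Q ^ˢ 0 = Φ (Yᴴ * Y) := by
    rw [← ker_le_ker_iff_mul_supportPow_zero (hΦ.map_posSemidef hQ)]
    refine hΦ.ker_le_ker (posSemidef_conjTranspose_mul_self Y) hQ ?_
    rw [ker_le_ker_iff_mul_supportPow_zero hQ, Matrix.mul_assoc, hY]
  have hzero := hΦ.map_mul_eq_zero (Y := Y) (M := 1 - Φ Q ^ˢ 0)
    (by rw [mul_assoc, mul_sub, mul_one, hYY, sub_self, mul_zero]) X
  rw [mul_sub, mul_one, sub_eq_zero] at hzero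
  exact hzero.symm

end IsKPositive

end KPositive

section StripBounded

open Complex.HadamardThreeLines

variable {E F : Type*} [NormedAddCommGroup E] [NormedSpace ℂ E] [NormedAddCommGroup F]
  [NormedSpace ℂ F]

/-- Entire functions bounded on the strip `0 ≤ re z ≤ 1`, the class to which the three lines
theorem is applied. -/
def EntireStripBounded (f : ℂ → E) : Prop :=
  Differentiable ℂ f ∧ BddAbove ((norm ∘ f) '' verticalClosedStrip 0 1)

namespace EntireStripBounded

lemma mul {R : Type*} [NormedRing R] [NormedAlgebra ℂ R] {f g : ℂ → R}
    (hf : EntireStripBounded f) (hg : EntireStripBounded g) :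
    EntireStripBounded fun z => f z * g z := by
  obtain ⟨hfd, C, hC⟩ := hf
  obtain ⟨hgd, D, hD⟩ := hg
  refine ⟨hfd.mul hgd, C * D, Set.forall_mem_image.2 fun z hz => (norm_mul_le _ _).trans ?_⟩
  have hfz : ‖f z‖ ≤ C := hC (Set.mem_image_of_mem _ hz)
  have hgz : ‖g z‖ ≤ D := hD (Set.mem_image_of_mem _ hz)
  gcongr
  exact (norm_nonneg _).trans hfz

lemma clm_comp {f : ℂ → E} (hf : EntireStripBounded f) (L : E →L[ℂ] F) :
    EntireStripBounded fun z => L (f z) := by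
  obtain ⟨hfd, C, hC⟩ := hf
  refine ⟨L.differentiable.comp hfd, ‖L‖ * C,
    Set.forall_mem_image.2 fun z hz => (L.le_opNorm _).trans ?_⟩
  have hfz : ‖f z‖ ≤ C := hC (Set.mem_image_of_mem _ hz)
  gcongr

lemma linearMap_comp [FiniteDimensional ℂ E] {f : ℂ → E} (hf : EntireStripBounded f)
    (L : E →ₗ[ℂ] F) : EntireStripBounded fun z => L (f z) :=
  hf.clm_comp L.toContinuousLinearMap

lemma norm_le_rpow_mul_rpow {f : ℂ → E} (hf : EntireStripBounded f) {a b : ℝ}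
    (ha : ∀ z : ℂ, z.re = 0 → ‖f z‖ ≤ a) (hb : ∀ z : ℂ, z.re = 1 → ‖f z‖ ≤ b) {θ : ℝ}
    (hθ : θ ∈ Set.Icc (0 : ℝ) 1) : ‖f θ‖ ≤ a ^ (1 - θ) * b ^ θ := by
  simpa only [Complex.ofReal_re] using norm_le_interp_of_mem_verticalClosedStrip₀₁' f (z := θ) hθ
    hf.1.diffContOnCl hf.2 ha hb

end EntireStripBounded

variable {n : Type*} [Fintype n] [DecidableEq n]

lemma differentiable_supportPow (A : Matrix n n ℂ) : Differentiable ℂ (supportPow A) := by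
  by_cases hA : A.IsHermitian
  · have hdiag : Differentiable ℂ fun z i => supportCpow (hA.eigenvalues i) z :=
      differentiable_pi.2 fun i => differentiable_supportCpow _
    let L : (n → ℂ) →ₗ[ℂ] Matrix n n ℂ :=
      (Unitary.conjStarAlgAut ℂ (Matrix n n ℂ) hA.eigenvectorUnitary).toAlgEquiv.toLinearMap ∘ₗ
        diagonalLinearMap n ℂ ℂ
    have hL : supportPow A = fun z => L fun i => supportCpow (hA.eigenvalues i) z :=
      funext fun z => dif_pos hA
    rw [hL]
    exact L.toContinuousLinearMap.differentiable.comp hdiag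
  · have hzero : supportPow A = fun _ => 0 := funext fun z => dif_neg hA
    rw [hzero]
    exact differentiable_const 0

lemma entireStripBounded_supportPow (A : Matrix n n ℂ) (c : ℝ) :
    EntireStripBounded fun z => A ^ˢ ((c : ℂ) * z) := by
  have hcont : Continuous fun x : ℝ => ‖A ^ˢ ((2 * (c * x) : ℝ) : ℂ)‖ :=
    ((differentiable_supportPow A).continuous.comp (by fun_prop)).norm
  obtain ⟨C, hC⟩ := (isCompact_Icc (a := (0 : ℝ)) (b := 1)).bddAbove_image hcont.continuousOn
  refine ⟨(differentiable_supportPow A).comp (by fun_prop), √C,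
    Set.forall_mem_image.2 fun z hz => Real.le_sqrt_of_sq_le ?_⟩
  have hsq : ‖A ^ˢ ((c : ℂ) * z)‖ ^ 2 = ‖A ^ˢ ((2 * (c * z.re) : ℝ) : ℂ)‖ := by
    rw [sq, ← CStarRing.norm_star_mul_self, star_eq_conjTranspose,
      conjTranspose_supportPow_mul_self, Complex.re_ofReal_mul]
  exact hsq.trans_le (hC (Set.mem_image_of_mem _ hz))

end StripBounded

section AnalyticFamilies

variable {l n m : Type*} [Fintype l] [Fintype n] [DecidableEq n] [Fintype m] [DecidableEq m]

/-- The analytic family on the input side, started at `T` for `z = 0`. When `Tᴴ * T = A ^ α`, the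
negative power of `A` cancels `T` on the line `re z = 1`, leaving an operator dominated by a square
root of `Q`. -/
noncomputable def inputFamily (α : ℝ) (T : Matrix l n ℂ) (A Q : Matrix n n ℂ) (z : ℂ) :
    Matrix l n ℂ :=
  T * (A ^ˢ (((-α / 2 : ℝ) : ℂ) * z) * Q ^ˢ (((1 / 2 : ℝ) : ℂ) * z))

/-- The analytic family on the output side, whose factor in `Q` is inverse to the one in
`inputFamily`. -/
noncomputable def outputFamily (α : ℝ) (B Q : Matrix n n ℂ) (z : ℂ) : Matrix n n ℂ :=
  Q ^ˢ (((-1 / 2 : ℝ) : ℂ) * z) * B ^ˢ (((α / 2 : ℝ) : ℂ) * z)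

variable {α : ℝ} {T : Matrix l n ℂ} {A B Q S : Matrix n n ℂ} {z : ℂ}

lemma conjTranspose_inputFamily_mul_self (α : ℝ) (T : Matrix l n ℂ) (A Q : Matrix n n ℂ) (z : ℂ) :
    (inputFamily α T A Q z)ᴴ * inputFamily α T A Q z =
      (Q ^ˢ (((1 / 2 : ℝ) : ℂ) * z))ᴴ * ((A ^ˢ (((-α / 2 : ℝ) : ℂ) * z))ᴴ * (Tᴴ * T) *
        A ^ˢ (((-α / 2 : ℝ) : ℂ) * z)) * Q ^ˢ (((1 / 2 : ℝ) : ℂ) * z) := by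
  simp only [inputFamily, conjTranspose_mul, Matrix.mul_assoc]

lemma conjTranspose_outputFamily_mul_mul (α : ℝ) (B Q S : Matrix n n ℂ) (z : ℂ) :
    (outputFamily α B Q z)ᴴ * S * outputFamily α B Q z =
      (B ^ˢ (((α / 2 : ℝ) : ℂ) * z))ᴴ * ((Q ^ˢ (((-1 / 2 : ℝ) : ℂ) * z))ᴴ * S *
        Q ^ˢ (((-1 / 2 : ℝ) : ℂ) * z)) * B ^ˢ (((α / 2 : ℝ) : ℂ) * z) := by
  simp only [outputFamily, conjTranspose_mul, mul_assoc]

lemma re_trace_conjTranspose_inputFamily_mul_self_le (hz : z.re = 0) :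
    ((inputFamily α T A Q z)ᴴ * inputFamily α T A Q z).trace.re ≤ (Tᴴ * T).trace.re := by
  have hre (c : ℝ) : ((c : ℂ) * z).re = 0 := by rw [Complex.re_ofReal_mul, hz, mul_zero]
  have hT := posSemidef_conjTranspose_mul_self T
  rw [conjTranspose_inputFamily_mul_self]
  exact (re_trace_conj_supportPow_le (hT.conjTranspose_mul_mul_same _) Q (hre _)).trans
    (re_trace_conj_supportPow_le hT A (hre _))

lemma conjTranspose_inputFamily_mul_self_le (hT : Tᴴ * T = A ^ˢ (α : ℂ)) (hQ : Q.PosSemidef)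
    (hz : z.re = 1) : (inputFamily α T A Q z)ᴴ * inputFamily α T A Q z ≤ Q := by
  have hcancel :
      (A ^ˢ (((-α / 2 : ℝ) : ℂ) * z))ᴴ * A ^ˢ (α : ℂ) * A ^ˢ (((-α / 2 : ℝ) : ℂ) * z) ≤ 1 := by
    rw [conjTranspose_supportPow_mul_mul, Complex.re_ofReal_mul, hz,
      show (α : ℂ) + (2 * (-α / 2 * 1) : ℝ) = 0 by push_cast; ring]
    exact (isStarProjection_supportPow_zero A).le_one
  have hle := star_left_conjugate_le_conjugate hcancel (Q ^ˢ (((1 / 2 : ℝ) : ℂ) * z))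
  rwa [← hT, star_eq_conjTranspose, ← conjTranspose_inputFamily_mul_self, mul_one,
    conjTranspose_supportPow_mul_self, Complex.re_ofReal_mul, hz,
    show ((2 * (1 / 2 * 1) : ℝ) : ℂ) = 1 by norm_num, supportPow_one hQ] at hle

lemma re_trace_conj_outputFamily_le (hS : S.PosSemidef) (hz : z.re = 0) :
    ((outputFamily α B Q z)ᴴ * S * outputFamily α B Q z).trace.re ≤ S.trace.re := by
  have hre (c : ℝ) : ((c : ℂ) * z).re = 0 := by rw [Complex.re_ofReal_mul, hz, mul_zero]
  rw [conjTranspose_outputFamily_mul_mul]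
  exact (re_trace_conj_supportPow_le (hS.conjTranspose_mul_mul_same _) B (hre _)).trans
    (re_trace_conj_supportPow_le hS Q (hre _))

lemma conj_outputFamily_le (hQ : Q.PosSemidef) (hz : z.re = 1) :
    (outputFamily α B Q z)ᴴ * Q * outputFamily α B Q z ≤ B ^ˢ (α : ℂ) := by
  have hcancel : (Q ^ˢ (((-1 / 2 : ℝ) : ℂ) * z))ᴴ * Q * Q ^ˢ (((-1 / 2 : ℝ) : ℂ) * z) ≤ 1 := by
    nth_rw 2 [← supportPow_one hQ]
    rw [conjTranspose_supportPow_mul_mul, Complex.re_ofReal_mul, hz,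
      show (1 : ℂ) + (2 * (-1 / 2 * 1) : ℝ) = 0 by norm_num]
    exact (isStarProjection_supportPow_zero Q).le_one
  have hle := star_left_conjugate_le_conjugate hcancel (B ^ˢ (((α / 2 : ℝ) : ℂ) * z))
  rwa [star_eq_conjTranspose, ← conjTranspose_outputFamily_mul_mul, mul_one,
    conjTranspose_supportPow_mul_self, Complex.re_ofReal_mul, hz, mul_one,
    mul_div_cancel₀ α two_ne_zero] at hle

variable {Φ : Matrix n n ℂ →ₗ[ℂ] Matrix m m ℂ}

lemma entireStripBounded_trace_families (α : ℝ) (X T : Matrix l n ℂ) (A Q : Matrix n n ℂ)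
    (N B Q' : Matrix m m ℂ) :
    EntireStripBounded fun z =>
      (Nᴴ * Φ (Xᴴ * inputFamily α T A Q z) * outputFamily α B Q' z).trace := by
  have hin := ((entireStripBounded_supportPow A (-α / 2)).mul
    (entireStripBounded_supportPow Q (1 / 2))).linearMap_comp (Φ ∘ₗ LinearMap.mulLeft ℂ (Xᴴ * T))
  have hout := (entireStripBounded_supportPow Q' (-1 / 2)).mul
    (entireStripBounded_supportPow B (α / 2))
  simpa only [inputFamily, outputFamily, LinearMap.comp_apply, LinearMap.mulLeft_apply,
    traceLinearMap_apply, Matrix.mul_assoc] using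
    (hin.mul hout).linearMap_comp (traceLinearMap m ℂ ℂ ∘ₗ LinearMap.mulLeft ℂ Nᴴ)

lemma norm_trace_families_le (hΦ : IsKPositive 2 Φ) (htr : ∀ X, (Φ X).trace = X.trace)
    {X : Matrix l n ℂ} {N B : Matrix m m ℂ} (hQ : Q.PosSemidef) (hT : Tᴴ * T = A ^ˢ (α : ℂ))
    (hN : Nᴴ * Φ (Xᴴ * X) * N = B ^ˢ (α : ℂ)) {θ : ℝ} (hθ : θ ∈ Set.Icc (0 : ℝ) 1) :
    ‖(Nᴴ * Φ (Xᴴ * inputFamily α T A Q θ) * outputFamily α B (Φ Q) θ).trace‖ ≤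
      (B ^ˢ (α : ℂ)).trace.re ^ ((1 + θ) / 2) * (A ^ˢ (α : ℂ)).trace.re ^ ((1 - θ) / 2) := by
  set a := (A ^ˢ (α : ℂ)).trace.re
  set b := (B ^ˢ (α : ℂ)).trace.re
  have ha : 0 ≤ a := re_trace_nonneg_s6 (posSemidef_supportPow_ofReal A α)
  have hb : 0 ≤ b := re_trace_nonneg_s6 (posSemidef_supportPow_ofReal B α)
  have hCS (z : ℂ) := hN ▸ hΦ.norm_trace_sq_le X (inputFamily α T A Q z) N
    (outputFamily α B (Φ Q) z)
  have hleft (z : ℂ) (hz : z.re = 0) :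
      ‖(Nᴴ * Φ (Xᴴ * inputFamily α T A Q z) * outputFamily α B (Φ Q) z).trace‖ ≤ √(b * a) := by
    refine Real.le_sqrt_of_sq_le ((hCS z).trans (mul_le_mul_of_nonneg_left ?_ hb))
    refine (re_trace_conj_outputFamily_le
      (hΦ.map_posSemidef (posSemidef_conjTranspose_mul_self _)) hz).trans ?_
    rw [htr]
    exact (re_trace_conjTranspose_inputFamily_mul_self_le hz).trans_eq (by rw [hT])
  have hright (z : ℂ) (hz : z.re = 1) :
      ‖(Nᴴ * Φ (Xᴴ * inputFamily α T A Q z) * outputFamily α B (Φ Q) z).trace‖ ≤ b := by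
    refine (pow_le_pow_iff_left₀ (norm_nonneg _) hb two_ne_zero).1 ((hCS z).trans ?_)
    rw [sq]
    refine mul_le_mul_of_nonneg_left (re_trace_mono ?_) hb
    exact (star_left_conjugate_le_conjugate
      (hΦ.map_mono (conjTranspose_inputFamily_mul_self_le hT hQ hz)) _).trans
      (conj_outputFamily_le (hΦ.map_posSemidef hQ) hz)
  refine ((entireStripBounded_trace_families α X T A Q N B (Φ Q)).norm_le_rpow_mul_rpow hleft
    hright hθ).trans_eq ?_
  have h1 : 0 ≤ (1 - θ) / 2 := by linarith [hθ.2]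
  rw [Real.sqrt_eq_rpow, ← Real.rpow_mul (mul_nonneg hb ha), Real.mul_rpow hb ha, mul_right_comm,
    ← Real.rpow_add_of_nonneg hb (by linarith [hθ.2]) hθ.1]
  ring_nf

end AnalyticFamilies

section Sandwich

variable {l n m : Type*} [Fintype l] [Fintype n] [DecidableEq n] [Fintype m] [DecidableEq m]
  {X : Matrix l n ℂ} {P Q : Matrix n n ℂ} {α : ℝ}

/-- The operator `Q ^ (-α'/2) * P * Q ^ (-α'/2)` with `α' = (α - 1) / α`, whose `α`-th power is
traced in the sandwiched Rényi relative entropy. -/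
noncomputable def sandwich (α : ℝ) (P Q : Matrix n n ℂ) : Matrix n n ℂ :=
  Q ^ˢ (((1 - α) / (2 * α) : ℝ) : ℂ) * P * Q ^ˢ (((1 - α) / (2 * α) : ℝ) : ℂ)

/-- The operator `N` for which `Nᴴ * P * N` is the `α`-th power of the sandwich of `P` by `Q`. -/
noncomputable def sandwichFactor (α : ℝ) (P Q : Matrix n n ℂ) : Matrix n n ℂ :=
  Q ^ˢ (((1 - α) / (2 * α) : ℝ) : ℂ) * sandwich α P Q ^ˢ (((α - 1) / 2 : ℝ) : ℂ)

/-- The sandwiched Rényi quasi-entropy, the trace inside the logarithm of `Dtilde`. -/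
noncomputable def sandwichedQuasi (α : ℝ) (P Q : Matrix n n ℂ) : ℝ :=
  (sandwich α P Q ^ˢ (α : ℂ)).trace.re

lemma sandwich_eq_conjTranspose_mul_mul (α : ℝ) (P Q : Matrix n n ℂ) :
    sandwich α P Q = (Q ^ˢ (((1 - α) / (2 * α) : ℝ) : ℂ))ᴴ * P *
      Q ^ˢ (((1 - α) / (2 * α) : ℝ) : ℂ) := by
  rw [conjTranspose_supportPow_ofReal, sandwich]

lemma sandwich_conjTranspose_mul_self (α : ℝ) (X : Matrix l n ℂ) (Q : Matrix n n ℂ) :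
    sandwich α (Xᴴ * X) Q = (X * Q ^ˢ (((1 - α) / (2 * α) : ℝ) : ℂ))ᴴ *
      (X * Q ^ˢ (((1 - α) / (2 * α) : ℝ) : ℂ)) := by
  simp only [sandwich_eq_conjTranspose_mul_mul, conjTranspose_mul, Matrix.mul_assoc]

lemma posSemidef_sandwich (α : ℝ) (hP : P.PosSemidef) (Q : Matrix n n ℂ) :
    (sandwich α P Q).PosSemidef := by
  rw [sandwich_eq_conjTranspose_mul_mul]
  exact hP.conjTranspose_mul_mul_same _

lemma conjTranspose_sandwichFactor_mul_mul (α : ℝ) (hP : P.PosSemidef) (Q : Matrix n n ℂ) :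
    (sandwichFactor α P Q)ᴴ * P * sandwichFactor α P Q = sandwich α P Q ^ˢ (α : ℂ) := by
  calc (sandwichFactor α P Q)ᴴ * P * sandwichFactor α P Q
      = (sandwich α P Q ^ˢ (((α - 1) / 2 : ℝ) : ℂ))ᴴ * sandwich α P Q ^ˢ 1 *
          sandwich α P Q ^ˢ (((α - 1) / 2 : ℝ) : ℂ) := by
        rw [supportPow_one (posSemidef_sandwich α hP Q), sandwichFactor]
        generalize sandwich α P Q ^ˢ (((α - 1) / 2 : ℝ) : ℂ) = G
        simp only [sandwich_eq_conjTranspose_mul_mul, conjTranspose_mul, Matrix.mul_assoc]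
    _ = sandwich α P Q ^ˢ (α : ℂ) := by
        rw [conjTranspose_supportPow_mul_mul, Complex.ofReal_re, mul_div_cancel₀ _ two_ne_zero]
        push_cast
        rw [add_sub_cancel]

lemma sandwich_eq_zero_iff (hP : P.PosSemidef) (hQ : Q.PosSemidef) :
    sandwich α P Q = 0 ↔ P * Q = 0 := by
  obtain ⟨X, rfl⟩ := CStarAlgebra.nonneg_iff_eq_star_mul_self.1 hP.nonneg
  rw [star_eq_conjTranspose, sandwich_conjTranspose_mul_self, conjTranspose_mul_self_eq_zero,
    conjTranspose_mul_self_mul_eq_zero]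
  set s : ℂ := (((1 - α) / (2 * α) : ℝ) : ℂ)
  refine ⟨fun h => ?_, fun h => ?_⟩
  · rw [← supportPow_one hQ, ← supportPow_mul_of_add_eq Q (add_sub_cancel s 1),
      ← Matrix.mul_assoc, h, Matrix.zero_mul]
  · rw [← add_sub_cancel 1 s, ← self_mul_supportPow hQ, ← Matrix.mul_assoc, h, zero_mul]

lemma sandwichedQuasi_nonneg (α : ℝ) (P Q : Matrix n n ℂ) : 0 ≤ sandwichedQuasi α P Q :=
  re_trace_nonneg_s6 (posSemidef_supportPow_ofReal _ α)

lemma sandwichedQuasi_pos_iff (hP : P.PosSemidef) (hQ : Q.PosSemidef) :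
    0 < sandwichedQuasi α P Q ↔ P * Q ≠ 0 := by
  rw [sandwichedQuasi, re_trace_supportPow_pos_iff (posSemidef_sandwich α hP Q), Ne,
    sandwich_eq_zero_iff hP hQ]

lemma inputFamily_sandwichFactor_one_sub_one_div (hα : α ≠ 0) (hX : X * Q ^ˢ 0 = X) :
    inputFamily α (X * sandwichFactor α (Xᴴ * X) Q) (sandwich α (Xᴴ * X) Q) Q
      ((1 - 1 / α : ℝ) : ℂ) = X := by
  have hα0 : (α : ℂ) ≠ 0 := Complex.ofReal_ne_zero.2 hα
  have hsupp := mul_supportPow_zero_conjTranspose_mul_self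
    (X * Q ^ˢ (((1 - α) / (2 * α) : ℝ) : ℂ))
  rw [← sandwich_conjTranspose_mul_self] at hsupp
  rw [inputFamily, sandwichFactor]
  generalize sandwich α (Xᴴ * X) Q = A at hsupp ⊢
  have hA : A ^ˢ (((α - 1) / 2 : ℝ) : ℂ) *
      A ^ˢ (((-α / 2 : ℝ) : ℂ) * ((1 - 1 / α : ℝ) : ℂ)) = A ^ˢ 0 :=
    supportPow_mul_of_add_eq A (by push_cast; field_simp; ring)
  have hQ : Q ^ˢ (((1 - α) / (2 * α) : ℝ) : ℂ) *
      Q ^ˢ (((1 / 2 : ℝ) : ℂ) * ((1 - 1 / α : ℝ) : ℂ)) = Q ^ˢ 0 :=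
    supportPow_mul_of_add_eq Q (by push_cast; field_simp; ring)
  rw [← Matrix.mul_assoc X, ← Matrix.mul_assoc, Matrix.mul_assoc _ _ (A ^ˢ _), hA, hsupp,
    Matrix.mul_assoc, hQ, hX]

lemma outputFamily_sandwich_one_sub_one_div (hα : α ≠ 0) (P Q : Matrix n n ℂ) :
    outputFamily α (sandwich α P Q) Q ((1 - 1 / α : ℝ) : ℂ) = sandwichFactor α P Q := by
  have hα0 : (α : ℂ) ≠ 0 := Complex.ofReal_ne_zero.2 hα
  unfold outputFamily sandwichFactor
  congr 2 <;> push_cast <;> field_simp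
  ring

lemma inputFamily_sandwichFactor_one_div_sub_one (hα : α ≠ 0) (X : Matrix l n ℂ)
    (Q : Matrix n n ℂ) :
    inputFamily α (X * sandwichFactor α (Xᴴ * X) Q) (sandwich α (Xᴴ * X) Q) Q
      ((1 / α - 1 : ℝ) : ℂ) =
    X * (Q ^ˢ (((1 - α) / (2 * α) : ℝ) : ℂ) * sandwich α (Xᴴ * X) Q ^ˢ ((α - 1 : ℝ) : ℂ) *
      Q ^ˢ (((1 - α) / (2 * α) : ℝ) : ℂ)) := by
  have hα0 : (α : ℂ) ≠ 0 := Complex.ofReal_ne_zero.2 hα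
  rw [inputFamily, sandwichFactor]
  generalize sandwich α (Xᴴ * X) Q = A
  have hA : A ^ˢ (((α - 1) / 2 : ℝ) : ℂ) *
      A ^ˢ (((-α / 2 : ℝ) : ℂ) * ((1 / α - 1 : ℝ) : ℂ)) = A ^ˢ ((α - 1 : ℝ) : ℂ) :=
    supportPow_mul_of_add_eq A (by push_cast; field_simp; ring)
  have hexp : ((1 / 2 : ℝ) : ℂ) * ((1 / α - 1 : ℝ) : ℂ) = (((1 - α) / (2 * α) : ℝ) : ℂ) := by
    push_cast
    field_simp
  rw [← hA, hexp]
  simp only [Matrix.mul_assoc]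

lemma outputFamily_sandwich_one_div_sub_one (hα : α ≠ 0) (P Q : Matrix n n ℂ) :
    outputFamily α (sandwich α P Q) Q ((1 / α - 1 : ℝ) : ℂ) =
      Q ^ˢ (-(((1 - α) / (2 * α) : ℝ) : ℂ)) *
        sandwich α P Q ^ˢ (-(((α - 1) / 2 : ℝ) : ℂ)) := by
  have hα0 : (α : ℂ) ≠ 0 := Complex.ofReal_ne_zero.2 hα
  unfold outputFamily
  congr 2 <;> push_cast <;> field_simp
  ring

lemma conjTranspose_sandwichFactor (α : ℝ) (P Q : Matrix n n ℂ) :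
    (sandwichFactor α P Q)ᴴ = sandwich α P Q ^ˢ (((α - 1) / 2 : ℝ) : ℂ) *
      Q ^ˢ (((1 - α) / (2 * α) : ℝ) : ℂ) := by
  rw [sandwichFactor, conjTranspose_mul, conjTranspose_supportPow_ofReal,
    conjTranspose_supportPow_ofReal]

lemma trace_mul_conj_sandwich_supportPow (α : ℝ) (hP : P.PosSemidef) (Q : Matrix n n ℂ) :
    (P * (Q ^ˢ (((1 - α) / (2 * α) : ℝ) : ℂ) * sandwich α P Q ^ˢ ((α - 1 : ℝ) : ℂ) *
      Q ^ˢ (((1 - α) / (2 * α) : ℝ) : ℂ))).trace = (sandwich α P Q ^ˢ (α : ℂ)).trace := by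
  rw [← Matrix.mul_assoc, trace_mul_comm, ← Matrix.mul_assoc, ← Matrix.mul_assoc, ← sandwich,
    self_mul_supportPow (posSemidef_sandwich α hP Q)]
  push_cast
  rw [add_sub_cancel]

variable {Φ : Matrix n n ℂ →ₗ[ℂ] Matrix m m ℂ}

lemma trace_families_sandwich_one_div_sub_one (hα : α ≠ 0) (hΦ : IsKPositive 2 Φ)
    (htr : ∀ X, (Φ X).trace = X.trace) (X : Matrix l n ℂ) (hQ : Q.PosSemidef) :
    ((sandwichFactor α (Φ (Xᴴ * X)) (Φ Q))ᴴ *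
      Φ (Xᴴ * inputFamily α (X * sandwichFactor α (Xᴴ * X) Q) (sandwich α (Xᴴ * X) Q) Q
        ((1 / α - 1 : ℝ) : ℂ)) *
      outputFamily α (sandwich α (Φ (Xᴴ * X)) (Φ Q)) (Φ Q) ((1 / α - 1 : ℝ) : ℂ)).trace =
    (sandwich α (Xᴴ * X) Q ^ˢ (α : ℂ)).trace := by
  have hsupp := hΦ.supportPow_zero_mul_map X (Y := inputFamily α (X * sandwichFactor α (Xᴴ * X) Q)
    (sandwich α (Xᴴ * X) Q) Q ((1 / α - 1 : ℝ) : ℂ)) (Φ Q ^ˢ (((1 - α) / (2 * α) : ℝ) : ℂ))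
  rw [← sandwich_eq_conjTranspose_mul_mul, conjTranspose_supportPow_ofReal] at hsupp
  rw [outputFamily_sandwich_one_div_sub_one hα, conjTranspose_sandwichFactor]
  rw [inputFamily_sandwichFactor_one_div_sub_one hα] at hsupp ⊢
  set s : ℂ := (((1 - α) / (2 * α) : ℝ) : ℂ)
  set t : ℂ := (((α - 1) / 2 : ℝ) : ℂ)
  set B := sandwich α (Φ (Xᴴ * X)) (Φ Q)
  set R := X * (Q ^ˢ s * sandwich α (Xᴴ * X) Q ^ˢ ((α - 1 : ℝ) : ℂ) * Q ^ˢ s)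
  have hR : R * Q ^ˢ 0 = R := by
    simp only [R, Matrix.mul_assoc, supportPow_mul_supportPow, add_zero]
  calc (B ^ˢ t * Φ Q ^ˢ s * Φ (Xᴴ * R) * (Φ Q ^ˢ (-s) * B ^ˢ (-t))).trace
      = (B ^ˢ (-t) * B ^ˢ t * (Φ Q ^ˢ s * Φ (Xᴴ * R)) * Φ Q ^ˢ (-s)).trace := by
        rw [← Matrix.mul_assoc, trace_mul_comm]
        simp only [Matrix.mul_assoc]
    _ = (Φ Q ^ˢ s * Φ (Xᴴ * R) * Φ Q ^ˢ (-s)).trace := by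
        rw [supportPow_mul_of_add_eq B (neg_add_cancel t), hsupp]
    _ = (Φ (Xᴴ * R)).trace := by
        rw [mul_assoc, trace_mul_comm, mul_assoc, supportPow_mul_of_add_eq _ (neg_add_cancel s),
          hΦ.map_mul_supportPow_zero hQ X hR]
    _ = (sandwich α (Xᴴ * X) Q ^ˢ (α : ℂ)).trace := by
        rw [htr, ← Matrix.mul_assoc,
          trace_mul_conj_sandwich_supportPow α (posSemidef_conjTranspose_mul_self X)]

end Sandwich

lemma le_of_le_rpow_mul_rpow {x y t : ℝ} (hy : 0 ≤ y) (ht : 0 < t)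
    (h : x ≤ y ^ t * x ^ (1 - t)) : x ≤ y := by
  by_contra! hlt
  have hx0 : 0 < x := hy.trans_lt hlt
  refine h.not_gt ?_
  calc y ^ t * x ^ (1 - t) < x ^ t * x ^ (1 - t) := by gcongr
    _ = x := by rw [← Real.rpow_add hx0, add_sub_cancel, Real.rpow_one]

section DataProcessing

variable {l n m : Type*} [Fintype l] [Fintype n] [DecidableEq n] [Fintype m] [DecidableEq m]
  {P Q : Matrix n n ℂ} {α : ℝ} {Φ : Matrix n n ℂ →ₗ[ℂ] Matrix m m ℂ}

lemma norm_trace_families_sandwich_le (hΦ : IsKPositive 2 Φ) (htr : ∀ X, (Φ X).trace = X.trace)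
    (X : Matrix l n ℂ) (hQ : Q.PosSemidef) {θ : ℝ} (hθ : θ ∈ Set.Icc (0 : ℝ) 1) :
    ‖((sandwichFactor α (Φ (Xᴴ * X)) (Φ Q))ᴴ *
      Φ (Xᴴ * inputFamily α (X * sandwichFactor α (Xᴴ * X) Q) (sandwich α (Xᴴ * X) Q) Q θ) *
      outputFamily α (sandwich α (Φ (Xᴴ * X)) (Φ Q)) (Φ Q) θ).trace‖ ≤
    sandwichedQuasi α (Φ (Xᴴ * X)) (Φ Q) ^ ((1 + θ) / 2) *
      sandwichedQuasi α (Xᴴ * X) Q ^ ((1 - θ) / 2) := by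
  have hP := posSemidef_conjTranspose_mul_self X
  refine norm_trace_families_le hΦ htr hQ ?_
    (conjTranspose_sandwichFactor_mul_mul α (hΦ.map_posSemidef hP) (Φ Q)) hθ
  rw [← conjTranspose_sandwichFactor_mul_mul α hP Q]
  simp only [conjTranspose_mul, Matrix.mul_assoc]

lemma sandwichedQuasi_map_le (hα : 1 ≤ α) (hΦ : IsKPositive 2 Φ)
    (htr : ∀ X, (Φ X).trace = X.trace) (hP : P.PosSemidef) (hQ : Q.PosSemidef)
    (hPQ : ∀ v : n → ℂ, Q.mulVec v = 0 → P.mulVec v = 0) :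
    sandwichedQuasi α (Φ P) (Φ Q) ≤ sandwichedQuasi α P Q := by
  obtain ⟨X, rfl⟩ := CStarAlgebra.nonneg_iff_eq_star_mul_self.1 hP.nonneg
  rw [star_eq_conjTranspose] at hP hPQ ⊢
  have hX : X * Q ^ˢ 0 = X :=
    mul_supportPow_zero_eq_self_iff.2 ((ker_le_ker_iff_mul_supportPow_zero hQ).1 hPQ)
  have hα0 : 0 < α := zero_lt_one.trans_le hα
  have hinv : 0 < 1 / α := one_div_pos.2 hα0
  have hinv' : 1 / α ≤ 1 := (div_le_one hα0).2 hα
  have hinterp := (Complex.re_le_norm _).trans (norm_trace_families_sandwich_le (α := α) hΦ htr X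
    hQ (θ := 1 - 1 / α) ⟨by linarith, by linarith⟩)
  rw [inputFamily_sandwichFactor_one_sub_one_div hα0.ne' hX,
    outputFamily_sandwich_one_sub_one_div hα0.ne',
    conjTranspose_sandwichFactor_mul_mul α (hΦ.map_posSemidef hP), mul_comm] at hinterp
  refine le_of_le_rpow_mul_rpow (sandwichedQuasi_nonneg _ _ _)
    (t := (1 - (1 - 1 / α)) / 2) (by linarith) (hinterp.trans_eq ?_)
  ring_nf

lemma le_sandwichedQuasi_map (hα : α ∈ Set.Icc (1 / 2 : ℝ) 1) (hΦ : IsKPositive 2 Φ)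
    (htr : ∀ X, (Φ X).trace = X.trace) (hP : P.PosSemidef) (hQ : Q.PosSemidef) :
    sandwichedQuasi α P Q ≤ sandwichedQuasi α (Φ P) (Φ Q) := by
  obtain ⟨X, rfl⟩ := CStarAlgebra.nonneg_iff_eq_star_mul_self.1 hP.nonneg
  have hα0 : 0 < α := by linarith [hα.1]
  have hinv : 1 ≤ 1 / α := (one_le_div hα0).2 hα.2
  have hinv' : 1 / α ≤ 2 := (div_le_iff₀ hα0).2 (by linarith [hα.1])
  have hinterp := (Complex.re_le_norm _).trans (norm_trace_families_sandwich_le (α := α) hΦ htr X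
    hQ (θ := 1 / α - 1) ⟨by linarith, by linarith⟩)
  rw [trace_families_sandwich_one_div_sub_one hα0.ne' hΦ htr X hQ] at hinterp
  refine le_of_le_rpow_mul_rpow (sandwichedQuasi_nonneg _ _ _)
    (t := (1 + (1 / α - 1)) / 2) (by linarith) (hinterp.trans_eq ?_)
  rw [star_eq_conjTranspose]
  ring_nf

lemma sandwichedQuasi_eq_re_trace_mpow (hα : α ≠ 0) (hα1 : α ≠ 1) (hP : P.PosSemidef)
    (hQ : Q.PosSemidef) :
    sandwichedQuasi α P Q =
      (mpow (mpow Q ((1 - α) / (2 * α)) * P * mpow Q ((1 - α) / (2 * α))) α).trace.re := by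
  have hs : (1 - α) / (2 * α) ≠ 0 :=
    div_ne_zero (sub_ne_zero.2 hα1.symm) (mul_ne_zero two_ne_zero hα)
  rw [mpow_eq_supportPow hQ hs, ← sandwich, mpow_eq_supportPow (posSemidef_sandwich α hP Q) hα,
    sandwichedQuasi]

lemma Dtilde_eq_coe (hα : α ≠ 0) (hα1 : α ≠ 1) (hP : P.PosSemidef) (hQ : Q.PosSemidef)
    (h : (α < 1 ∧ P * Q ≠ 0) ∨ ∀ v : n → ℂ, Q.mulVec v = 0 → P.mulVec v = 0) :
    Dtilde α P Q =
      ((1 / (α - 1) * Real.logb 2 (sandwichedQuasi α P Q / P.trace.re) : ℝ) : EReal) := by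
  rw [Dtilde, if_pos h, sandwichedQuasi_eq_re_trace_mpow hα hα1 hP hQ]

lemma Dtilde_map_le_of_one_lt (hα : 1 < α) (hΦ : IsKPositive 2 Φ)
    (htr : ∀ X, (Φ X).trace = X.trace) (hP : P.PosSemidef) (hQ : Q.PosSemidef)
    (hPtr : P.trace ≠ 0) : Dtilde α (Φ P) (Φ Q) ≤ Dtilde α P Q := by
  by_cases hker : ∀ v : n → ℂ, Q.mulVec v = 0 → P.mulVec v = 0
  · have hα0 : α ≠ 0 := (zero_lt_one.trans hα).ne'
    have hΦP := hΦ.map_posSemidef hP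
    have hΦQ := hΦ.map_posSemidef hQ
    have hΦker := hΦ.ker_le_ker hP hQ hker
    have hΦP0 : Φ P ≠ 0 := fun h => hPtr (by rw [← htr, h, trace_zero])
    have hpos := (sandwichedQuasi_pos_iff (α := α) hΦP hΦQ).2
      (mul_ne_zero_of_ker_le_ker hΦQ hΦP0 hΦker)
    have hle := sandwichedQuasi_map_le hα.le hΦ htr hP hQ hker
    have htrpos : 0 < P.trace.re := (Complex.pos_iff.1 (hP.trace_nonneg.lt_of_ne' hPtr)).1
    rw [Dtilde_eq_coe hα0 hα.ne' hΦP hΦQ (.inr hΦker), Dtilde_eq_coe hα0 hα.ne' hP hQ (.inr hker),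
      htr, EReal.coe_le_coe_iff]
    refine mul_le_mul_of_nonneg_left ?_ (one_div_nonneg.2 (sub_nonneg.2 hα.le))
    gcongr
    exact one_lt_two
  · have hcond : ¬((α < 1 ∧ P * Q ≠ 0) ∨ ∀ v : n → ℂ, Q.mulVec v = 0 → P.mulVec v = 0) :=
      not_or.2 ⟨fun h => h.1.not_gt hα, hker⟩
    rw [show Dtilde α P Q = ⊤ from if_neg hcond]
    exact le_top

lemma Dtilde_map_le_of_lt_one (hα : α ∈ Set.Ico (1 / 2 : ℝ) 1) (hΦ : IsKPositive 2 Φ)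
    (htr : ∀ X, (Φ X).trace = X.trace) (hP : P.PosSemidef) (hQ : Q.PosSemidef)
    (hPtr : P.trace ≠ 0) : Dtilde α (Φ P) (Φ Q) ≤ Dtilde α P Q := by
  have hP0 : P ≠ 0 := fun h => hPtr (by rw [h, trace_zero])
  by_cases hPQ : P * Q = 0
  · have hcond : ¬((α < 1 ∧ P * Q ≠ 0) ∨ ∀ v : n → ℂ, Q.mulVec v = 0 → P.mulVec v = 0) :=
      not_or.2 ⟨fun h => h.2 hPQ, fun h => mul_ne_zero_of_ker_le_ker hQ hP0 h hPQ⟩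
    rw [show Dtilde α P Q = ⊤ from if_neg hcond]
    exact le_top
  · have hα0 : α ≠ 0 := by linarith [hα.1]
    have hΦP := hΦ.map_posSemidef hP
    have hΦQ := hΦ.map_posSemidef hQ
    have hpos := (sandwichedQuasi_pos_iff (α := α) hP hQ).2 hPQ
    have hle := le_sandwichedQuasi_map ⟨hα.1, hα.2.le⟩ hΦ htr hP hQ
    have hΦPQ := (sandwichedQuasi_pos_iff hΦP hΦQ).1 (hpos.trans_le hle)
    have htrpos : 0 < P.trace.re := (Complex.pos_iff.1 (hP.trace_nonneg.lt_of_ne' hPtr)).1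
    rw [Dtilde_eq_coe hα0 hα.2.ne hΦP hΦQ (.inl ⟨hα.2, hΦPQ⟩),
      Dtilde_eq_coe hα0 hα.2.ne hP hQ (.inl ⟨hα.2, hPQ⟩), htr, EReal.coe_le_coe_iff]
    refine mul_le_mul_of_nonpos_left ?_ (one_div_nonpos.2 (sub_nonpos.2 hα.2.le))
    gcongr
    exact one_lt_two

theorem Dtilde_data_processing_general (hα : α ∈ Set.Ico (1 / 2 : ℝ) 1 ∪ Set.Ioi 1)
    (hΦ : IsKPositive 2 Φ) (htr : ∀ X, (Φ X).trace = X.trace) (hP : P.PosSemidef)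
    (hQ : Q.PosSemidef) (hPtr : P.trace ≠ 0) : Dtilde α (Φ P) (Φ Q) ≤ Dtilde α P Q :=
  hα.elim (fun hlt => Dtilde_map_le_of_lt_one hlt hΦ htr hP hQ hPtr)
    fun hgt => Dtilde_map_le_of_one_lt hgt hΦ htr hP hQ hPtr

end DataProcessing

/-- Data processing inequality for the sandwiched Rényi relative entropy,
`α ∈ [1/2,1) ∪ (1,∞)`. -/
theorem Dtilde_data_processing {n m : Type*} [Fintype n] [DecidableEq n]
    [Fintype m] [DecidableEq m]
    (α : ℝ) (hα : α ∈ Set.Ico (1/2 : ℝ) 1 ∪ Set.Ioi 1)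
    (Φ : Matrix n n ℂ →ₗ[ℂ] Matrix m m ℂ) (hΦ : IsCPTP Φ)
    (P Q : Matrix n n ℂ) (hP : P.PosSemidef) (hQ : Q.PosSemidef)
    (hPtr : P.trace ≠ 0) :
    Dtilde α (Φ P) (Φ Q) ≤ Dtilde α P Q :=
  Dtilde_data_processing_general hα (hΦ.1 2) hΦ.2 hP hQ hPtr
end
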